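/- arXiv:math/0609310 — 5 statements merged into one kernel-verified Lean document; each statement's English description precedes it below -/
import Mathlib

section
/- Let X be a geodesic metric space, r > 0 and L ≥ 0. Let β:[0,L]→X be an isometric embedding (a unit-speed geodesic) and α:[0,1]→X a Lipschitz curve with α(0)=β(0) and α(1)=β(L). Let t_z ∈ [0,L], set z := β(t_z), and assume d(α(s), z) ≥ r for all s ∈ [0,1] (this forces r ≤ t_z and r ≤ L−t_z). Set z' := β(t_z − r/2), N := { β(t) : t ∈ [0,L], |t − t_z| ≤ r/2 }, f(x) := max{0, 1 − (2/r)·dist(x, N)} and π(x) := r^{-1}·d(x, z'). Let γ:[0,1]→X be the concatenated loop γ(s) = β(2sL) for s ∈ [0,1/2] and γ(s) = α(2−2s) for s ∈ [1/2,1] (so γ(0)=γ(1)=β(0)). Then f is Lipschitz with constant 2/r, π is Lipschitz with constant 1/r, and ∫₀¹ f(γ(s))·(π∘γ)'(s) ds ≥ 1, where (π∘γ)' denotes the almost-everywhere defined derivative of the Lipschitz function π∘γ. -/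
open scoped NNReal ENNReal
open MeasureTheory Filter

universe u v

namespace SharpIsop

/-- The closed unit disc `D² ⊂ ℝ²`. -/
def D2 : Set (ℝ × ℝ) := {p | p.1 ^ 2 + p.2 ^ 2 ≤ 1}

/-- The length (total variation over `[0,1]`) of a curve `γ : [0,1] → X`. -/
noncomputable def loopLength {X : Type u} [PseudoEMetricSpace X] (γ : ℝ → X) : ℝ :=
  (eVariationOn γ (Set.Icc 0 1)).toReal

/-- A Lipschitz loop in `X`: a Lipschitz map `γ : [0,1] → X` with `γ 0 = γ 1`. -/
def IsLipLoop {X : Type u} [PseudoEMetricSpace X] (γ : ℝ → X) : Prop :=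
  (∃ K : ℝ≥0, LipschitzOnWith K γ (Set.Icc 0 1)) ∧ γ 0 = γ 1

/-- The metric (directional) derivative of `φ : ℝ² → X` at `x` in direction `v`,
defined via a `limsup` so that it is everywhere defined (and agrees a.e. with the
limit when the latter exists). -/
noncomputable def mder {X : Type u} [PseudoMetricSpace X] (φ : ℝ × ℝ → X)
    (x v : ℝ × ℝ) : ℝ :=
  Filter.limsup (fun r : ℝ => dist (φ (x + r • v)) (φ x) / r) (nhdsWithin 0 (Set.Ioi 0))

/-- The Jacobian of a (semi)norm `s` on `ℝ²`:  `π / Leb²({v : s v ≤ 1})` if this set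
has finite measure, `0` otherwise. -/
noncomputable def jac2 (s : ℝ × ℝ → ℝ) : ℝ :=
  if volume {v : ℝ × ℝ | s v ≤ 1} < ⊤ then
    Real.pi / (volume {v : ℝ × ℝ | s v ≤ 1}).toReal
  else 0

/-- The parametrized (Hausdorff) area of a map `φ : D² → X`. -/
noncomputable def lipArea {X : Type u} [PseudoMetricSpace X] (φ : ℝ × ℝ → X) : ℝ :=
  ∫ x in D2, jac2 (mder φ x)

/-- `φ : D² → X` is a singular Lipschitz disc bounding the loop `γ : [0,1] → X`. -/
def BoundsLoop {X : Type u} [PseudoMetricSpace X] (φ : ℝ × ℝ → X) (γ : ℝ → X) : Prop :=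
  (∃ K : ℝ≥0, LipschitzOnWith K φ D2) ∧
    ∀ s ∈ Set.Icc (0:ℝ) 1, φ (Real.cos (2 * Real.pi * s), Real.sin (2 * Real.pi * s)) = γ s

/-- `g : [0, d x y] → X` is a geodesic from `x` to `y`. -/
def IsGeodesicSeg {X : Type u} [MetricSpace X] (x y : X) (g : ℝ → X) : Prop :=
  g 0 = x ∧ g (dist x y) = y ∧
    ∀ s ∈ Set.Icc (0:ℝ) (dist x y), ∀ t ∈ Set.Icc (0:ℝ) (dist x y),
      dist (g s) (g t) = |s - t|

/-- A geodesic metric space: any two points are joined by a geodesic. -/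
def GeodesicSpace (X : Type u) [MetricSpace X] : Prop :=
  ∀ x y : X, ∃ g : ℝ → X, IsGeodesicSeg x y g

/-- Gromov hyperbolicity via δ-slim geodesic triangles. -/
def GromovHyperbolic (X : Type u) [MetricSpace X] : Prop :=
  ∃ δ : ℝ, 0 ≤ δ ∧
    ∀ x y z : X, ∀ gxy gyz gzx : ℝ → X,
      IsGeodesicSeg x y gxy → IsGeodesicSeg y z gyz → IsGeodesicSeg z x gzx →
      ∀ s ∈ Set.Icc (0:ℝ) (dist x y),
        ∃ p ∈ gyz '' Set.Icc (0:ℝ) (dist y z) ∪ gzx '' Set.Icc (0:ℝ) (dist z x),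
          dist (gxy s) p ≤ δ

/-- `L^∞(X)`: the Banach space of bounded real functions on `X` with sup norm. -/
abbrev Linfty (X : Type u) : Type u := lp (fun _ : X => ℝ) ⊤

/-- The Kuratowski embedding `x ↦ d(x,·) − d(x₀,·)` of `X` into `L^∞(X)`. -/
noncomputable def kuratowski (X : Type u) [MetricSpace X] (x₀ : X) (x : X) : Linfty X :=
  ⟨fun y => dist x y - dist x₀ y, memℓp_infty ⟨dist x x₀, by
    rintro t ⟨y, rfl⟩
    simpa [Real.norm_eq_abs] using abs_dist_sub_le x x₀ y⟩⟩

/-- `Y` admits a quadratic isoperimetric inequality for curves (with singular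
Lipschitz discs as fillings). -/
def QuadIsopSpace (Y : Type u) [MetricSpace Y] : Prop :=
  ∃ C > (0:ℝ), ∀ c : ℝ → Y, IsLipLoop c →
    ∃ φ : ℝ × ℝ → Y, BoundsLoop φ c ∧ lipArea φ ≤ C * (loopLength c) ^ 2

/-- `X` admits a disc-thickening with a quadratic isoperimetric inequality. -/
def HasDiscThickeningQII (X : Type u) [MetricSpace X] : Prop :=
  ∃ (X' : Type u) (m : MetricSpace X') (ι : X → X'),
    letI := m
    CompleteSpace X' ∧ Isometry ι ∧
      EMetric.hausdorffEdist (Set.range ι) (Set.univ : Set X') ≠ ⊤ ∧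
      QuadIsopSpace X'

/-- Integral of a function that is affine on an open interval. -/
theorem aux_piece (F : ℝ → ℝ) (a b c d : ℝ) (hab : a ≤ b)
    (h : ∀ x ∈ Set.Ioo a b, F x = c + d * x) :
    IntervalIntegrable F volume a b ∧
      ∫ x in a..b, F x = c * (b - a) + d * (b ^ 2 - a ^ 2) / 2 := by
  have hc : IntervalIntegrable (fun x : ℝ => c + d * x) volume a b :=
    Continuous.intervalIntegrable (by fun_prop) a b
  have hae : ∀ᵐ x ∂volume, x ∈ Set.uIoc a b → F x = c + d * x := by
    have : ∀ᵐ x : ℝ ∂volume, x ≠ b := by simp [ae_iff]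
    filter_upwards [this] with x hx hx'
    rw [Set.uIoc_of_le hab] at hx'
    exact h x ⟨hx'.1, lt_of_le_of_ne hx'.2 hx⟩
  refine ⟨hc.congr_ae ?_, ?_⟩
  · rw [EventuallyEq, ae_restrict_iff' measurableSet_uIoc]
    filter_upwards [hae] with x hx hx'
    exact (hx hx').symm
  · rw [intervalIntegral.integral_congr_ae hae, intervalIntegral.integral_add (by simp)
      (Continuous.intervalIntegrable (by fun_prop) a b)]
    simp only [intervalIntegral.integral_const, smul_eq_mul]
    rw [intervalIntegral.integral_const_mul, integral_id]
    ring

theorem aux_deriv (q : ℝ → ℝ) (a b c d : ℝ)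
    (h : ∀ x ∈ Set.Ioo a b, q x = c + d * x) (x : ℝ) (hx : x ∈ Set.Ioo a b) :
    deriv q x = d := by
  have h1 : q =ᶠ[nhds x] fun x => c + d * x := by
    filter_upwards [isOpen_Ioo.mem_nhds hx] with y hy using h y hy
  rw [h1.deriv_eq]
  have : HasDerivAt (fun x : ℝ => c + d * x) (d * 1) x :=
    ((hasDerivAt_id x).const_mul d).const_add c
  simpa using this.deriv

/-- key computation in the proof of Lemma 4.2: for a unit-speed
geodesic `β : [0,L] → X`, a Lipschitz curve `α` with the same endpoints avoiding the
ball `B(z, r)` around `z = β(t_z)`, the functions `f(x) = max{0, 1 − (2/r)·dist(x,N)}`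
(with `N` the part of `β` at parameter-distance ≤ r/2 from `t_z`) and
`π(x) = r⁻¹·d(x, β(t_z − r/2))` are `2/r`- resp. `1/r`-Lipschitz, and the
concatenated loop `γ` of `β` and the reversal of `α` satisfies
`∫₀¹ f(γ(s))·(π∘γ)'(s) ds ≥ 1`. -/
theorem nondegenerate_loop_from_detour {X : Type u} [MetricSpace X]
    (hX : GeodesicSpace X) (r L : ℝ) (hr : 0 < r) (hL : 0 ≤ L)
    (β α : ℝ → X)
    (hβ : ∀ s ∈ Set.Icc (0:ℝ) L, ∀ t ∈ Set.Icc (0:ℝ) L, dist (β s) (β t) = |s - t|)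
    (hα : ∃ K : ℝ≥0, LipschitzOnWith K α (Set.Icc 0 1))
    (hα0 : α 0 = β 0) (hα1 : α 1 = β L)
    (tz : ℝ) (htz : tz ∈ Set.Icc (0:ℝ) L)
    (hfar : ∀ s ∈ Set.Icc (0:ℝ) 1, r ≤ dist (α s) (β tz)) :
    ∀ (N : Set X) (f p : X → ℝ) (γ : ℝ → X),
      N = β '' {t | t ∈ Set.Icc (0:ℝ) L ∧ |t - tz| ≤ r / 2} →
      f = (fun x => max 0 (1 - (2 / r) * Metric.infDist x N)) →
      p = (fun x => r⁻¹ * dist x (β (tz - r / 2))) →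
      γ = (fun s => if s ≤ 1 / 2 then β (2 * s * L) else α (2 - 2 * s)) →
      LipschitzWith (Real.toNNReal (2 / r)) f ∧
      LipschitzWith (Real.toNNReal (1 / r)) p ∧
      1 ≤ ∫ s in (0:ℝ)..1, f (γ s) * deriv (fun t => p (γ t)) s := by
  intro N f p γ hN hf hp hγ
  have h0m : (0:ℝ) ∈ Set.Icc (0:ℝ) L := ⟨le_rfl, hL⟩
  have hLm : L ∈ Set.Icc (0:ℝ) L := ⟨hL, le_rfl⟩
  have hr1 : r ≤ tz := by
    have := hfar 0 ⟨le_rfl, zero_le_one⟩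
    rw [hα0, hβ 0 h0m tz htz, zero_sub, abs_neg, abs_of_nonneg htz.1] at this
    exact this
  have hr2 : r ≤ L - tz := by
    have := hfar 1 ⟨zero_le_one, le_rfl⟩
    rw [hα1, hβ L hLm tz htz, abs_of_nonneg (by linarith [htz.2])] at this
    exact this
  have hLpos : 0 < L := by linarith
  have hNne : N.Nonempty := by
    rw [hN]
    exact ⟨β tz, tz, ⟨htz, by rw [sub_self, abs_zero]; positivity⟩, rfl⟩
  have hinf : ∀ u ∈ Set.Icc (0:ℝ) L, Metric.infDist (β u) N = max 0 (|u - tz| - r / 2) := by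
    intro u hu
    apply le_antisymm
    · have key : ∀ t ∈ Set.Icc (0:ℝ) L, |t - tz| ≤ r / 2 → Metric.infDist (β u) N ≤ |u - t| := by
        intro t ht ht'
        rw [← hβ u hu t ht]
        apply Metric.infDist_le_dist_of_mem
        rw [hN]
        exact ⟨t, ⟨ht, ht'⟩, rfl⟩
      by_cases h1 : |u - tz| ≤ r / 2
      · have := key u hu h1
        simp only [sub_self, abs_zero] at this
        exact this.trans (le_max_left _ _)
      · push Not at h1
        refine le_trans ?_ (le_max_right _ _)
        rcases le_total tz u with h2 | h2
        · rw [abs_of_nonneg (by linarith)] at h1 ⊢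
          have := key (tz + r / 2) ⟨by linarith, by linarith⟩
            (by rw [add_sub_cancel_left, abs_of_pos (by linarith)])
          rw [abs_of_nonneg (by linarith)] at this
          linarith
        · rw [abs_of_nonpos (by linarith)] at h1 ⊢
          have := key (tz - r / 2) ⟨by linarith, by linarith⟩
            (by rw [sub_sub_cancel_left, abs_neg, abs_of_pos (by linarith)])
          rw [abs_of_nonpos (by linarith)] at this
          linarith
    · apply max_le Metric.infDist_nonneg
      rw [Metric.le_infDist hNne]
      intro y hy
      rw [hN] at hy
      obtain ⟨t, ⟨ht, ht'⟩, rfl⟩ := hy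
      rw [hβ u hu t ht]
      have := abs_sub_le u t tz
      linarith
  have hfβ : ∀ u ∈ Set.Icc (0:ℝ) L,
      f (β u) = max 0 (1 - (2 / r) * max 0 (|u - tz| - r / 2)) := by
    intro u hu
    rw [hf]
    simp only
    rw [hinf u hu]
  have hfα : ∀ s ∈ Set.Icc (0:ℝ) 1, f (α s) = 0 := by
    intro s hs
    rw [hf]
    simp only
    apply max_eq_left
    have : r / 2 ≤ Metric.infDist (α s) N := by
      rw [Metric.le_infDist hNne]
      intro y hy
      rw [hN] at hy
      obtain ⟨t, ⟨ht, ht'⟩, rfl⟩ := hy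
      have h1 := hfar s hs
      have h2 := dist_triangle (α s) (β t) (β tz)
      rw [hβ t ht tz htz] at h2
      linarith
    have h3 : (2 / r) * (r / 2) ≤ (2 / r) * Metric.infDist (α s) N := by gcongr
    have h4 : (2 / r) * (r / 2) = 1 := by field_simp
    linarith
  refine ⟨?_, ?_, ?_⟩
  · apply LipschitzWith.of_dist_le_mul
    intro x y
    rw [Real.coe_toNNReal _ (by positivity), hf, Real.dist_eq]
    simp only
    refine (abs_max_sub_max_le_max _ _ _ _).trans ?_
    rw [sub_self, abs_zero]
    apply max_le (by positivity)
    have h1 := (Metric.lipschitz_infDist_pt N).dist_le_mul x y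
    rw [Real.dist_eq, NNReal.coe_one, one_mul] at h1
    have h2 : 1 - 2 / r * Metric.infDist x N - (1 - 2 / r * Metric.infDist y N)
        = -(2 / r * (Metric.infDist x N - Metric.infDist y N)) := by ring
    rw [h2, abs_neg, abs_mul, abs_of_pos (by positivity : 0 < 2 / r)]
    gcongr
  · apply LipschitzWith.of_dist_le_mul
    intro x y
    rw [Real.coe_toNNReal _ (by positivity), hp, Real.dist_eq]
    simp only
    rw [← mul_sub, abs_mul, abs_of_pos (by positivity : 0 < r⁻¹), one_div]
    gcongr
    exact abs_dist_sub_le x y _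
  · have h2L : 0 < 2 * L := by linarith
    set F : ℝ → ℝ := fun s => f (γ s) * deriv (fun t => p (γ t)) s with hF
    have hγ1 : ∀ s, s < 1 / 2 → γ s = β (2 * s * L) := by
      intro s hs
      rw [hγ]
      simp only
      rw [if_pos hs.le]
    have hmem : ∀ s, 0 < s → s < 1 / 2 → 2 * s * L ∈ Set.Icc (0:ℝ) L := by
      intro s h1 h2
      exact ⟨by positivity, by nlinarith⟩
    have hpβ : ∀ s, 0 < s → s < 1 / 2 → p (γ s) = r⁻¹ * |2 * s * L - (tz - r / 2)| := by
      intro s h1 h2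
      rw [hγ1 s h2, hp]
      simp only
      rw [hβ _ (hmem s h1 h2) _ ⟨by linarith, by linarith⟩]
    have hfγ : ∀ s, 0 < s → s < 1 / 2 →
        f (γ s) = max 0 (1 - (2 / r) * max 0 (|2 * s * L - tz| - r / 2)) := by
      intro s h1 h2
      rw [hγ1 s h2, hfβ _ (hmem s h1 h2)]
    have ediv : ∀ s v : ℝ, s < v / (2 * L) ↔ 2 * s * L < v := by
      intro s v
      rw [lt_div_iff₀ h2L, show s * (2 * L) = 2 * s * L by ring]
    have ediv' : ∀ s v : ℝ, v / (2 * L) < s ↔ v < 2 * s * L := by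
      intro s v
      rw [div_lt_iff₀ h2L, show s * (2 * L) = 2 * s * L by ring]
    have hL2 : L / (2 * L) = 1 / 2 := by field_simp
    have hlt : ∀ s, s < 1 / 2 ↔ 2 * s * L < L := by
      intro s
      rw [← hL2, ediv]
    have hpos : ∀ s, 0 < s ↔ 0 < 2 * s * L := by
      intro s
      rw [← ediv', zero_div]
    have dneg : ∀ s, 0 < 2 * s * L → 2 * s * L < tz - r / 2 →
        deriv (fun t => p (γ t)) s = -(2 * L / r) := by
      intro s h1 h2
      apply aux_deriv _ 0 ((tz - r / 2) / (2 * L)) (r⁻¹ * (tz - r / 2))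
      · intro x hx
        have hx2 := (ediv _ _).1 hx.2
        rw [hpβ x hx.1 ((hlt x).2 (by linarith)), abs_of_neg (by linarith)]
        ring
      · exact ⟨(hpos s).2 h1, (ediv _ _).2 h2⟩
    have dpos : ∀ s, tz - r / 2 < 2 * s * L → 2 * s * L < L →
        deriv (fun t => p (γ t)) s = 2 * L / r := by
      intro s h1 h2
      apply aux_deriv _ ((tz - r / 2) / (2 * L)) (1 / 2) (-(r⁻¹ * (tz - r / 2)))
      · intro x hx
        have hx2 := (ediv' _ _).1 hx.1
        rw [hpβ x ((hpos x).2 (by linarith)) hx.2, abs_of_pos (by linarith)]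
        ring
      · exact ⟨(ediv' _ _).2 h1, (hlt s).2 h2⟩
    have fzero : ∀ s, 0 < 2 * s * L → 2 * s * L < L → r ≤ |2 * s * L - tz| → f (γ s) = 0 := by
      intro s h1 h2 h3
      rw [hfγ s ((hpos s).2 h1) ((hlt s).2 h2), max_eq_right (by linarith : 0 ≤ |2 * s * L - tz| - r / 2)]
      apply max_eq_left
      have h4 : (2 / r) * (r / 2) ≤ (2 / r) * (|2 * s * L - tz| - r / 2) := by gcongr; linarith
      have h5 : (2 / r) * (r / 2) = 1 := by field_simp
      linarith
    have fmid : ∀ s, 0 < 2 * s * L → 2 * s * L < L → r / 2 ≤ |2 * s * L - tz| →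
        |2 * s * L - tz| ≤ r → f (γ s) = 1 - (2 / r) * (|2 * s * L - tz| - r / 2) := by
      intro s h1 h2 h3 h3'
      rw [hfγ s ((hpos s).2 h1) ((hlt s).2 h2), max_eq_right (by linarith : 0 ≤ |2 * s * L - tz| - r / 2)]
      apply max_eq_right
      have h4 : (2 / r) * (|2 * s * L - tz| - r / 2) ≤ (2 / r) * (r / 2) := by gcongr; linarith
      have h5 : (2 / r) * (r / 2) = 1 := by field_simp
      linarith
    have fone : ∀ s, 0 < 2 * s * L → 2 * s * L < L → |2 * s * L - tz| ≤ r / 2 → f (γ s) = 1 := by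
      intro s h1 h2 h3
      rw [hfγ s ((hpos s).2 h1) ((hlt s).2 h2), max_eq_left (by linarith : |2 * s * L - tz| - r / 2 ≤ 0)]
      simp
    have hle : ∀ v w : ℝ, v ≤ w → v / (2 * L) ≤ w / (2 * L) := by
      intro v w h
      gcongr
    obtain ⟨i1, e1⟩ := aux_piece F (0 / (2 * L)) ((tz - r) / (2 * L)) 0 0 (hle _ _ (by linarith)) (by
      intro s hs
      have h1 := (ediv' _ _).1 hs.1
      have h2 := (ediv _ _).1 hs.2
      simp only [hF]
      rw [fzero s h1 (by linarith) (by rw [abs_of_neg (by linarith)]; linarith)]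
      simp)
    obtain ⟨i2, e2⟩ := aux_piece F ((tz - r) / (2 * L)) ((tz - r / 2) / (2 * L))
      (-(2 * L / r) * (1 - (2 / r) * (tz - r / 2))) (-(2 * L / r) * ((2 / r) * (2 * L)))
      (hle _ _ (by linarith)) (by
      intro s hs
      have h1 := (ediv' _ _).1 hs.1
      have h2 := (ediv _ _).1 hs.2
      simp only [hF]
      have ha : |2 * s * L - tz| = tz - 2 * s * L := by rw [abs_of_neg (by linarith)]; ring
      rw [fmid s (by linarith) (by linarith) (by rw [ha]; linarith) (by rw [ha]; linarith),
        dneg s (by linarith) h2, ha]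
      ring)
    obtain ⟨i3, e3⟩ := aux_piece F ((tz - r / 2) / (2 * L)) ((tz + r / 2) / (2 * L))
      (2 * L / r) 0 (hle _ _ (by linarith)) (by
      intro s hs
      have h1 := (ediv' _ _).1 hs.1
      have h2 := (ediv _ _).1 hs.2
      simp only [hF]
      rw [fone s (by linarith) (by linarith) (by rw [abs_le]; constructor <;> linarith),
        dpos s h1 (by linarith)]
      ring)
    obtain ⟨i4, e4⟩ := aux_piece F ((tz + r / 2) / (2 * L)) ((tz + r) / (2 * L))
      ((2 * L / r) * (1 + (2 / r) * (tz + r / 2))) (-(2 * L / r) * ((2 / r) * (2 * L)))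
      (hle _ _ (by linarith)) (by
      intro s hs
      have h1 := (ediv' _ _).1 hs.1
      have h2 := (ediv _ _).1 hs.2
      simp only [hF]
      have ha : |2 * s * L - tz| = 2 * s * L - tz := by rw [abs_of_pos (by linarith)]
      rw [fmid s (by linarith) (by linarith) (by rw [ha]; linarith) (by rw [ha]; linarith),
        dpos s (by linarith) (by linarith), ha]
      ring)
    obtain ⟨i5, e5⟩ := aux_piece F ((tz + r) / (2 * L)) (L / (2 * L)) 0 0 (hle _ _ (by linarith)) (by
      intro s hs
      have h1 := (ediv' _ _).1 hs.1
      have h2 := (ediv _ _).1 hs.2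
      simp only [hF]
      rw [fzero s (by linarith) (by linarith) (by rw [abs_of_pos (by linarith)]; linarith)]
      simp)
    obtain ⟨i6, e6⟩ := aux_piece F (L / (2 * L)) 1 0 0 (by rw [hL2]; norm_num) (by
      intro s hs
      rw [hL2] at hs
      simp only [hF]
      have : γ s = α (2 - 2 * s) := by
        rw [hγ]
        simp only
        rw [if_neg (not_le.2 hs.1)]
      rw [this, hfα _ ⟨by linarith [hs.2], by linarith [hs.1]⟩]
      simp)
    have j2 := i1.trans i2
    have j3 := j2.trans i3
    have j4 := j3.trans i4
    have j5 := j4.trans i5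
    have g2 := intervalIntegral.integral_add_adjacent_intervals i1 i2
    have g3 := intervalIntegral.integral_add_adjacent_intervals j2 i3
    have g4 := intervalIntegral.integral_add_adjacent_intervals j3 i4
    have g5 := intervalIntegral.integral_add_adjacent_intervals j4 i5
    have g6 := intervalIntegral.integral_add_adjacent_intervals j5 i6
    rw [zero_div] at g2 g3 g4 g5 g6 e1
    rw [← g6, ← g5, ← g4, ← g3, ← g2, e1, e2, e3, e4, e5, e6]
    apply le_of_eq
    field_simp
    ring

end SharpIsop
end

section
/- Let X be a metric space, ε'>0 and δ>0, and let K₁,…,Kₙ ⊂ ℝ be compact sets and φ_i: K_i → X maps that are (1+ε')-biLipschitz onto their images, i.e. |s−t|/(1+ε') ≤ d(φ_i(s),φ_i(t)) ≤ (1+ε')|s−t| for all s,t ∈ K_i. Assume the images are pairwise disjoint with dist(φ_i(K_i), φ_j(K_j)) ≥ 2(1+ε')δ/ε' whenever i≠j. Set Ω := ∪_i φ_i(K_i), let {z₁,…,z_m} ⊂ Ω be δ-dense in Ω (every point of Ω lies within distance δ of some z_k), and for each i let η̄_i: X → ℝ be a (1+ε')-Lipschitz extension of φ_i^{-1}: φ_i(K_i)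 → ℝ. Define Ψ: X → ℓ^∞_{n+m} by Ψ(x) := (η̄₁(x),…,η̄ₙ(x), d(x,z₁),…,d(x,z_m)). Then Ψ is (1+ε')-Lipschitz on X, and for all x,x' ∈ Ω one has ‖Ψ(x)−Ψ(x')‖_∞ ≥ d(x,x')/(1+ε'); in particular Ψ restricted to Ω is (1+ε')-biLipschitz. -/
open scoped NNReal ENNReal
open MeasureTheory Filter

universe u v

namespace SharpIsop

/-- construction in Lemma 2.2: given `(1+ε')`-biLipschitz maps
`φᵢ : Kᵢ → X` on compact sets `Kᵢ ⊂ ℝ` with well-separated pairwise disjoint images,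
a `δ`-dense finite set `z₁,…,z_m` in `Ω = ⋃ᵢ φᵢ(Kᵢ)` and `(1+ε')`-Lipschitz
extensions `η̄ᵢ : X → ℝ` of `φᵢ⁻¹`, the map
`Ψ(x) = (η̄₁(x),…,η̄ₙ(x), d(x,z₁),…,d(x,z_m))` into `ℓ^∞_{n+m}` is `(1+ε')`-Lipschitz
and satisfies `‖Ψ(x)−Ψ(x')‖_∞ ≥ d(x,x')/(1+ε')` for all `x, x' ∈ Ω`. -/
theorem biLipschitz_embedding_Psi {X : Type u} [MetricSpace X]
    (ε' δ : ℝ) (hε' : 0 < ε') (hδ : 0 < δ)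
    (n m : ℕ) (K : Fin n → Set ℝ) (hK : ∀ i, IsCompact (K i))
    (φ : Fin n → ℝ → X)
    (hbil : ∀ i, ∀ s ∈ K i, ∀ t ∈ K i,
      |s - t| / (1 + ε') ≤ dist (φ i s) (φ i t) ∧
        dist (φ i s) (φ i t) ≤ (1 + ε') * |s - t|)
    (hdisj : ∀ i j, i ≠ j → Disjoint (φ i '' K i) (φ j '' K j))
    (hsep : ∀ i j, i ≠ j → ∀ s ∈ K i, ∀ t ∈ K j,
      2 * (1 + ε') * δ / ε' ≤ dist (φ i s) (φ j t))
    (z : Fin m → X) (hz : ∀ k, z k ∈ ⋃ i, φ i '' K i)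
    (hdense : ∀ x ∈ ⋃ i, φ i '' K i, ∃ k, dist x (z k) ≤ δ)
    (η : Fin n → X → ℝ) (hη : ∀ i, LipschitzWith (Real.toNNReal (1 + ε')) (η i))
    (hext : ∀ i, ∀ s ∈ K i, η i (φ i s) = s) :
    ∀ Ψ : X → (Fin n ⊕ Fin m → ℝ),
      Ψ = (fun x => Sum.elim (fun i => η i x) (fun k => dist x (z k))) →
      LipschitzWith (Real.toNNReal (1 + ε')) Ψ ∧
      ∀ x ∈ ⋃ i, φ i '' K i, ∀ x' ∈ ⋃ i, φ i '' K i,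
        dist x x' / (1 + ε') ≤ dist (Ψ x) (Ψ x') := by
  intro Ψ hΨ
  subst hΨ
  have h1 : (0:ℝ) < 1 + ε' := by linarith
  have hc : ((Real.toNNReal (1 + ε') : ℝ≥0) : ℝ) = 1 + ε' := Real.coe_toNNReal _ h1.le
  refine ⟨?_, ?_⟩
  · refine LipschitzWith.of_dist_le_mul fun x y => ?_
    rw [hc]
    refine (dist_pi_le_iff (mul_nonneg h1.le dist_nonneg)).2 ?_
    rintro (i | k)
    · have h := (hη i).dist_le_mul x y
      rw [hc] at h
      simpa using h
    · have h := abs_dist_sub_le x y (z k)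
      have h2 : (0:ℝ) ≤ dist x y := dist_nonneg
      simp only [Sum.elim_inr, Real.dist_eq]
      nlinarith
  · intro x hx x' hx'
    obtain ⟨k, hk⟩ := hdense x hx
    obtain ⟨i, s, hs, rfl⟩ := Set.mem_iUnion.1 hx
    obtain ⟨j, t, ht, rfl⟩ := Set.mem_iUnion.1 hx'
    by_cases hij : i = j
    · subst hij
      have h := dist_le_pi_dist
        (Sum.elim (fun l => η l (φ i s)) (fun k => dist (φ i s) (z k)))
        (Sum.elim (fun l => η l (φ i t)) (fun k => dist (φ i t) (z k))) (Sum.inl i)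
      refine le_trans ?_ h
      simp only [Sum.elim_inl, Real.dist_eq, hext i s hs, hext i t ht]
      rw [div_le_iff₀ h1, mul_comm]
      exact (hbil i s hs t ht).2
    · have h := dist_le_pi_dist
        (Sum.elim (fun l => η l (φ i s)) (fun k => dist (φ i s) (z k)))
        (Sum.elim (fun l => η l (φ j t)) (fun k => dist (φ j t) (z k))) (Sum.inr k)
      refine le_trans ?_ h
      simp only [Sum.elim_inr, Real.dist_eq]
      have hD := hsep i j hij s hs t ht
      rw [div_le_iff₀ hε'] at hD
      have h3 := dist_triangle_right (φ i s) (φ j t) (z k)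
      have h4 := neg_abs_le (dist (φ i s) (z k) - dist (φ j t) (z k))
      have h5 : dist (φ i s) (φ j t) - 2 * δ ≤
          |dist (φ i s) (z k) - dist (φ j t) (z k)| := by linarith
      refine le_trans ?_ h5
      rw [div_le_iff₀ h1]
      linarith

end SharpIsop
end

section
/- There exists a universal constant C > 0 such that for every real Banach space Y and every Lipschitz loop γ:[0,1]→Y with γ(0)=γ(1), there is a singular Lipschitz disc φ: D² → Y bounding γ with Area(φ) ≤ C·length(γ)². -/
open scoped NNReal ENNReal
open MeasureTheory Filter

universe u v

namespace SharpIsop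

/-- standard parametrisation of the circle -/
noncomputable def ee (a : ℝ) : ℂ := Complex.exp (Complex.I * ((2 * Real.pi * a : ℝ) : ℂ))

lemma norm_ee (a : ℝ) : ‖ee a‖ = 1 := by
  unfold ee
  rw [mul_comm]; exact Complex.norm_exp_ofReal_mul_I _

lemma ee_sub (a b : ℝ) : ‖ee a - ee b‖ = 2 * |Real.sin (Real.pi * (b - a))| := by
  have h : ee a - ee b = - (ee a * (Complex.exp (Complex.I * ((2 * Real.pi * (b - a) : ℝ) : ℂ)) - 1)) := by
    unfold ee
    rw [mul_sub, ← Complex.exp_add]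
    push_cast
    ring_nf
  rw [h, norm_neg, norm_mul, norm_ee, Complex.norm_exp_I_mul_ofReal_sub_one]
  rw [show 2 * Real.pi * (b - a) / 2 = Real.pi * (b - a) by ring]
  simp

lemma ee_upper (a b : ℝ) (h0 : a ≤ b) : ‖ee a - ee b‖ ≤ 2 * Real.pi * (b - a) := by
  rw [ee_sub]
  have h := Real.abs_sin_le_abs (x := Real.pi * (b - a))
  rw [abs_of_nonneg (a := Real.pi * (b - a)) (mul_nonneg Real.pi_pos.le (by linarith))] at h
  linarith

lemma ee_upper' (a b : ℝ) (h1 : b - a ≤ 1) : ‖ee a - ee b‖ ≤ 2 * Real.pi * (1 - (b - a)) := by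
  rw [ee_sub]
  rw [← Real.sin_pi_sub, show Real.pi - Real.pi * (b - a) = Real.pi * (1 - (b - a)) by ring]
  have h := Real.abs_sin_le_abs (x := Real.pi * (1 - (b - a)))
  rw [abs_of_nonneg (a := Real.pi * (1 - (b - a))) (mul_nonneg Real.pi_pos.le (by linarith))] at h
  linarith

lemma ee_lower (a b : ℝ) (h0 : a ≤ b) (h1 : b - a ≤ 1) :
    b - a ≤ ‖ee a - ee b‖ / 4 ∨ 1 - (b - a) ≤ ‖ee a - ee b‖ / 4 := by
  rw [ee_sub]
  have hp := Real.pi_pos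
  rcases le_total (b - a) (1 / 2) with h | h
  · left
    have := Real.mul_le_sin (x := Real.pi * (b - a)) (mul_nonneg hp.le (by linarith)) (by nlinarith)
    rw [show 2 / Real.pi * (Real.pi * (b - a)) = 2 * (b - a) by field_simp] at this
    have h2 := le_abs_self (Real.sin (Real.pi * (b - a)))
    linarith
  · right
    rw [← Real.sin_pi_sub, show Real.pi - Real.pi * (b - a) = Real.pi * (1 - (b - a)) by ring]
    have := Real.mul_le_sin (x := Real.pi * (1 - (b - a))) (mul_nonneg hp.le (by linarith)) (by nlinarith)
    rw [show 2 / Real.pi * (Real.pi * (1 - (b - a))) = 2 * (1 - (b - a)) by field_simp] at this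
    have h2 := le_abs_self (Real.sin (Real.pi * (1 - (b - a))))
    linarith

lemma circ_lip {F : Type*} [NormedAddCommGroup F] (f : ℝ → F) (h : ℝ → ℝ) (K : ℝ) (hK : 0 ≤ K)
    (hh : ∀ s t, 0 ≤ s → s ≤ t → t ≤ 1 → 0 ≤ h t - h s ∧ h t - h s ≤ 1)
    (h1 : ∀ s t, 0 ≤ s → s ≤ t → t ≤ 1 → ‖f s - f t‖ ≤ K * (h t - h s))
    (h2 : ∀ s t, 0 ≤ s → s ≤ t → t ≤ 1 → ‖f s - f t‖ ≤ K * (1 - (h t - h s)))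
    (s t : ℝ) (hs : s ∈ Set.Icc (0:ℝ) 1) (ht : t ∈ Set.Icc (0:ℝ) 1) :
    ‖f s - f t‖ ≤ K / 4 * ‖ee (h s) - ee (h t)‖ := by
  wlog hst : s ≤ t generalizing s t
  · rw [norm_sub_rev, norm_sub_rev (ee _)]
    exact this t s ht hs (le_of_not_ge hst)
  obtain ⟨ha, hb⟩ := hh s t hs.1 hst ht.2
  rcases ee_lower (h s) (h t) (by linarith) hb with h' | h'
  · have := h1 s t hs.1 hst ht.2
    have h3 := mul_le_mul_of_nonneg_left h' hK
    linarith
  · have := h2 s t hs.1 hst ht.2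
    have h3 := mul_le_mul_of_nonneg_left h' hK
    linarith

lemma cone_lip {F : Type*} [NormedAddCommGroup F] [NormedSpace ℝ F] (p q : F) (a b : ℂ)
    (ha : ‖a‖ = 1) (hb : ‖b‖ = 1) (M K : ℝ) (hK : 0 ≤ K) (hp : ‖p‖ ≤ M) (hq : ‖q‖ ≤ M)
    (h : ‖p - q‖ ≤ K * ‖a - b‖) (r r' : ℝ) (hr : 0 ≤ r) (hr' : 0 ≤ r') :
    ‖r • p - r' • q‖ ≤ (M + 2 * K) * ‖r • a - r' • b‖ := by
  wlog hrr : r ≤ r' generalizing p q a b r r'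
  · rw [norm_sub_rev, norm_sub_rev (r • a)]
    exact this q p b a hb ha hq hp (by rwa [norm_sub_rev, norm_sub_rev b]) r' r hr' hr
      (le_of_not_ge hrr)
  have e1 : r' - r ≤ ‖r • a - r' • b‖ := by
    have := norm_sub_norm_le (r' • b) (r • a)
    rw [norm_smul, norm_smul, ha, hb, norm_sub_rev, Real.norm_of_nonneg hr,
      Real.norm_of_nonneg hr'] at this
    linarith
  have e2 : r * ‖a - b‖ ≤ 2 * ‖r • a - r' • b‖ := by
    have : r • (a - b) = (r • a - r' • b) + (r' - r) • b := by
      rw [smul_sub, sub_smul]; abel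
    have h3 := norm_add_le (r • a - r' • b) ((r' - r) • b)
    rw [← this, norm_smul, norm_smul, hb, Real.norm_of_nonneg hr,
      Real.norm_of_nonneg (by linarith : 0 ≤ r' - r)] at h3
    linarith
  have e3 : r • p - r' • q = r • (p - q) + (-(r' - r)) • q := by
    rw [smul_sub, neg_smul, sub_smul]; abel
  have e4 := norm_add_le (r • (p - q)) ((-(r' - r)) • q)
  rw [← e3, norm_smul, norm_smul, Real.norm_of_nonneg hr, norm_neg,
      Real.norm_of_nonneg (by linarith : 0 ≤ r' - r)] at e4
  have hM : 0 ≤ M := (norm_nonneg _).trans hp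
  have e5 : (r' - r) * ‖q‖ ≤ ‖r • a - r' • b‖ * M :=
    mul_le_mul e1 hq (norm_nonneg _) (norm_nonneg _)
  have e6 : r * ‖p - q‖ ≤ K * (2 * ‖r • a - r' • b‖) := by
    calc _ ≤ r * (K * ‖a - b‖) := mul_le_mul_of_nonneg_left h hr
      _ = K * (r * ‖a - b‖) := by ring
      _ ≤ _ := mul_le_mul_of_nonneg_left e2 hK
  nlinarith

/-- normalised angle -/
noncomputable def ang (z : ℂ) : ℝ := Int.fract (z.arg / (2 * Real.pi))

lemma ang_mem (z : ℂ) : ang z ∈ Set.Icc (0:ℝ) 1 :=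
  ⟨Int.fract_nonneg _, (Int.fract_lt_one _).le⟩

lemma ee_ang (z : ℂ) : ‖z‖ • ee (ang z) = z := by
  have : ee (ang z) = Complex.exp (z.arg * Complex.I) := by
    unfold ee ang
    rw [Complex.exp_eq_exp_iff_exists_int]
    refine ⟨-⌊z.arg / (2 * Real.pi)⌋, ?_⟩
    unfold Int.fract
    push_cast
    have : (Real.pi : ℂ) ≠ 0 := by exact_mod_cast Real.pi_ne_zero
    field_simp
    ring
  rw [this, Complex.real_smul, Complex.norm_mul_exp_arg_mul_I]

lemma exists_V {Y : Type*} [NormedAddCommGroup Y] (γ : ℝ → Y) (K : ℝ≥0)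
    (hK : LipschitzOnWith K γ (Set.Icc 0 1)) :
    ∃ V : ℝ → ℝ, V 0 = 0 ∧ V 1 = loopLength γ ∧
      (∀ s t, 0 ≤ s → s ≤ t → t ≤ 1 → ‖γ s - γ t‖ ≤ V t - V s) ∧
      (∀ s t, 0 ≤ s → s ≤ t → t ≤ 1 → V t - V s ≤ K * (t - s)) := by
  have hle : ∀ s t, 0 ≤ s → s ≤ t → t ≤ 1 →
      eVariationOn γ (Set.Icc 0 1 ∩ Set.Icc s t) ≤ ENNReal.ofReal (K * (t - s)) := by
    intro s t h0 hst h1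
    have h := (hK.mono (Set.inter_subset_left (t := Set.Icc s t))).comp_eVariationOn_le
      (g := id) (Set.mapsTo_id _)
    refine h.trans ?_
    rw [ENNReal.ofReal_mul NNReal.zero_le_coe, ENNReal.ofReal_coe_nnreal]
    gcongr
    exact (monotoneOn_id (s := Set.Icc (0:ℝ) 1)).eVariationOn_le ⟨h0, hst.trans h1⟩ ⟨h0.trans hst, h1⟩
  have hadd : ∀ s t, 0 ≤ s → s ≤ t → t ≤ 1 →
      (eVariationOn γ (Set.Icc 0 1 ∩ Set.Icc 0 t)).toReal
        - (eVariationOn γ (Set.Icc 0 1 ∩ Set.Icc 0 s)).toReal =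
        (eVariationOn γ (Set.Icc 0 1 ∩ Set.Icc s t)).toReal := by
    intro s t h0 hst h1
    rw [← eVariationOn.Icc_add_Icc γ (s := Set.Icc 0 1) h0 hst ⟨h0, hst.trans h1⟩, ENNReal.toReal_add]
    · ring
    · exact ne_top_of_le_ne_top ENNReal.ofReal_ne_top (hle 0 s le_rfl h0 (hst.trans h1))
    · exact ne_top_of_le_ne_top ENNReal.ofReal_ne_top (hle s t h0 hst h1)
  refine ⟨fun t => (eVariationOn γ (Set.Icc 0 1 ∩ Set.Icc 0 t)).toReal, ?_, ?_, ?_, ?_⟩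
  · have := hle 0 0 le_rfl le_rfl zero_le_one
    simp at this
    simp [this]
  · simp [loopLength]
  · intro s t h0 hst h1
    simp only
    rw [hadd s t h0 hst h1, ← dist_eq_norm, dist_edist]
    apply ENNReal.toReal_mono
    · exact ne_top_of_le_ne_top ENNReal.ofReal_ne_top (hle s t h0 hst h1)
    · exact eVariationOn.edist_le _ ⟨⟨h0, hst.trans h1⟩, le_rfl, hst⟩ ⟨⟨h0.trans hst, h1⟩, hst, le_rfl⟩
  · intro s t h0 hst h1
    simp only
    rw [hadd s t h0 hst h1]
    exact ENNReal.toReal_le_of_le_ofReal (mul_nonneg K.2 (by linarith)) (hle s t h0 hst h1)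

lemma vol_pre (T : ℝ × ℝ →L[ℝ] ℝ × ℝ) (r : ℝ) (hr : 0 < r) (hT : T.det = 0) :
    volume {v : ℝ × ℝ | ‖T v‖ ≤ r} = ⊤ := by
  obtain ⟨w, hw, hw0⟩ : ∃ w, T w = 0 ∧ w ≠ 0 := by
    have := LinearMap.bot_lt_ker_of_det_eq_zero (f := (T : ℝ × ℝ →ₗ[ℝ] ℝ × ℝ)) hT
    obtain ⟨w, hw, hw0⟩ := (Submodule.ne_bot_iff _).1 this.ne'
    exact ⟨w, hw, hw0⟩
  obtain ⟨d, hd, hd'⟩ : ∃ d > 0, ∀ v, ‖v‖ < d → ‖T v‖ ≤ r := by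
    have := (T.continuous.tendsto 0)
    rw [Metric.tendsto_nhds_nhds] at this
    obtain ⟨d, hd, h⟩ := this r hr
    refine ⟨d, hd, fun v hv => ?_⟩
    have := h (x := v) (by simpa using hv)
    simpa using this.le
  have hwn : 0 < ‖w‖ := norm_pos_iff.2 hw0
  set c : ℝ := 2 * d / ‖w‖ with hc
  have hcp : 0 < c := by positivity
  have hsub : (⋃ n : ℕ, Metric.ball (((n : ℝ) * c) • w) d) ⊆ {v : ℝ × ℝ | ‖T v‖ ≤ r} := by
    refine Set.iUnion_subset fun n v hv => ?_
    have h := hd' (v - ((n : ℝ) * c) • w) (by simpa [dist_eq_norm] using hv)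
    simpa [map_sub, hw] using h
  refine top_le_iff.1 (le_trans ?_ (measure_mono hsub))
  rw [measure_iUnion _ (fun _ => measurableSet_ball)]
  · simp_rw [Measure.addHaar_ball_center]
    rw [ENNReal.tsum_const_eq_top_of_ne_zero (Metric.measure_ball_pos _ _ hd).ne']
  · intro m n hmn
    apply Metric.ball_disjoint_ball
    rw [dist_eq_norm, ← sub_smul, norm_smul, ← sub_mul, norm_mul, Real.norm_of_nonneg hcp.le,
      mul_assoc, hc, div_mul_cancel₀ _ hwn.ne']
    have : (1:ℝ) ≤ ‖(m:ℝ) - n‖ := by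
      rw [Real.norm_eq_abs]
      have : (1:ℤ) ≤ |(m:ℤ) - n| := Int.one_le_abs (by simpa [sub_eq_zero] using hmn)
      exact_mod_cast this
    nlinarith

lemma jac_bound (s : ℝ × ℝ → ℝ) (T : ℝ × ℝ →L[ℝ] ℝ × ℝ) (K : ℝ) (hK : 0 < K)
    (h : ∀ v, s v ≤ K * ‖T v‖) : jac2 s ≤ Real.pi / 4 * K ^ 2 * |T.det| := by
  have hpi := Real.pi_pos
  unfold jac2
  split_ifs with hfin
  swap
  · positivity
  have hsub : {v : ℝ × ℝ | ‖T v‖ ≤ 1 / K} ⊆ {v | s v ≤ 1} := by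
    intro v hv
    have hv' : ‖T v‖ ≤ 1 / K := hv
    rw [le_div_iff₀ hK] at hv'
    have := h v
    simp only [Set.mem_setOf_eq]
    linarith
  have hle := measure_mono (μ := volume) hsub
  by_cases hT : T.det = 0
  · rw [vol_pre T (1 / K) (by positivity) hT] at hle
    exact absurd hfin (not_lt.2 hle)
  have hpre : volume {v : ℝ × ℝ | ‖T v‖ ≤ 1 / K} = ENNReal.ofReal (4 / (K ^ 2 * |T.det|)) := by
    have h1 := Measure.addHaar_preimage_linearMap (volume : Measure (ℝ × ℝ))
      (f := (T : ℝ × ℝ →ₗ[ℝ] ℝ × ℝ)) hT (Metric.closedBall 0 (1 / K))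
    have h2 : (T : ℝ × ℝ →ₗ[ℝ] ℝ × ℝ) ⁻¹' (Metric.closedBall 0 (1 / K)) = {v | ‖T v‖ ≤ 1 / K} := by
      ext v; simp
    rw [h2] at h1
    rw [h1, show (0 : ℝ × ℝ) = ((0:ℝ), (0:ℝ)) from rfl, ← closedBall_prod_same, Measure.volume_eq_prod,
      Measure.prod_prod, Real.volume_closedBall, ← ENNReal.ofReal_mul (by positivity),
      ← ENNReal.ofReal_mul (by positivity)]
    congr 1
    change |(T.det)⁻¹| * _ = _
    rw [abs_inv]
    have : |T.det| ≠ 0 := by simpa using hT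
    field_simp
    norm_num
  rw [hpre] at hle
  have hd : 0 < |T.det| := by simpa using hT
  have hle2 := (ENNReal.ofReal_le_iff_le_toReal hfin.ne).1 hle
  calc _ ≤ Real.pi / (4 / (K ^ 2 * |T.det|)) := by gcongr
    _ = _ := by field_simp

lemma mder_bound {Y : Type*} [NormedAddCommGroup Y] (φ : ℝ × ℝ → Y) (Ψ : ℝ × ℝ → ℝ × ℝ) (K : ℝ)
    (h : ∀ x y, ‖φ x - φ y‖ ≤ K * ‖Ψ x - Ψ y‖) (x : ℝ × ℝ) (T : ℝ × ℝ →L[ℝ] ℝ × ℝ)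
    (hT : HasFDerivAt Ψ T x) (v : ℝ × ℝ) : mder φ x v ≤ K * ‖T v‖ := by
  have ht : Tendsto (fun r : ℝ => K * ‖r⁻¹ • (Ψ (x + r • v) - Ψ x)‖) (nhdsWithin 0 (Set.Ioi 0))
      (nhds (K * ‖T v‖)) := by
    have h1 : HasDerivAt (fun r : ℝ => Ψ (x + r • v)) (T v) 0 := by
      have h2 : HasFDerivAt Ψ T (x + (0:ℝ) • v) := by simpa using hT
      have h3 : HasDerivAt (fun r : ℝ => x + r • v) v 0 := by
        simpa using ((hasDerivAt_id (0:ℝ)).smul_const v).const_add x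
      exact h2.comp_hasDerivAt 0 h3
    have := h1.tendsto_slope_zero_right
    simp only [zero_add, zero_smul, add_zero] at this
    exact this.norm.const_mul K
  unfold mder
  rw [← ht.limsup_eq]
  refine limsup_le_limsup ?_ ?_ ht.isBoundedUnder_le
  · filter_upwards [self_mem_nhdsWithin] with r hr
    have hr' : (0:ℝ) < r := hr
    rw [norm_smul, norm_inv, Real.norm_of_nonneg hr'.le, dist_eq_norm, div_le_iff₀ hr']
    have := h (x + r • v) x
    calc _ ≤ _ := this
      _ = _ := by field_simp
  · refine Filter.IsCoboundedUnder.of_frequently_ge (a := 0) (Eventually.frequently ?_)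
    filter_upwards [self_mem_nhdsWithin] with r hr
    have hr' : (0:ℝ) < r := hr
    positivity

lemma area_bound {Y : Type*} [NormedAddCommGroup Y] (φ : ℝ × ℝ → Y) (Ψ : ℝ × ℝ → ℝ × ℝ) (K : ℝ)
    (hK : 0 < K)
    (h : ∀ x y, ‖φ x - φ y‖ ≤ K * ‖Ψ x - Ψ y‖) (C : ℝ≥0) (hL : LipschitzWith C Ψ)
    (hinj : Function.Injective Ψ) (hmap : ∀ x ∈ D2, Ψ x ∈ D2) : lipArea φ ≤ Real.pi * K ^ 2 := by
  have hpi := Real.pi_pos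
  have hD2 : MeasurableSet D2 := by
    apply measurableSet_le <;> fun_prop
  set S : Set (ℝ × ℝ) := D2 ∩ {x | DifferentiableAt ℝ Ψ x} with hS
  have hSm : MeasurableSet S := hD2.inter (measurableSet_of_differentiableAt ℝ Ψ)
  have hae : S =ᵐ[volume] D2 := by
    have := hL.ae_differentiableAt (μ := volume)
    filter_upwards [this] with x hx
    apply propext
    exact ⟨fun hh => hh.1, fun hh => ⟨hh, hx⟩⟩
  have hder : ∀ x ∈ S, HasFDerivWithinAt Ψ (fderiv ℝ Ψ x) S x :=
    fun x hx => hx.2.hasFDerivAt.hasFDerivWithinAt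
  have hsub : Ψ '' S ⊆ Metric.closedBall 0 1 := by
    rintro _ ⟨x, hx, rfl⟩
    have := hmap x hx.1
    simp only [D2, Set.mem_setOf_eq] at this
    rw [mem_closedBall_zero_iff, Prod.norm_def]
    refine max_le ?_ ?_ <;> rw [Real.norm_eq_abs, ← sq_le_one_iff_abs_le_one] <;> nlinarith [sq_nonneg (Ψ x).1, sq_nonneg (Ψ x).2]
  have hvolB : volume (Metric.closedBall (0 : ℝ × ℝ) 1) = ENNReal.ofReal 4 := by
    rw [show (0 : ℝ × ℝ) = ((0:ℝ), (0:ℝ)) from rfl, ← closedBall_prod_same, Measure.volume_eq_prod,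
      Measure.prod_prod, Real.volume_closedBall, ← ENNReal.ofReal_mul (by positivity)]
    norm_num
  have hvol : volume (Ψ '' S) ≤ ENNReal.ofReal 4 := hvolB ▸ measure_mono hsub
  have hint : IntegrableOn (fun x => |(fderiv ℝ Ψ x).det|) S := by
    have := (integrableOn_image_iff_integrableOn_abs_det_fderiv_smul volume hSm hder hinj.injOn
      (fun _ => (1:ℝ))).1 (integrableOn_const (ne_top_of_le_ne_top ENNReal.ofReal_ne_top hvol))
    simpa using this
  have hval : ∫ x in S, |(fderiv ℝ Ψ x).det| ≤ 4 := by
    have := integral_image_eq_integral_abs_det_fderiv_smul volume hSm hder hinj.injOn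
      (fun _ => (1:ℝ))
    simp only [smul_eq_mul, mul_one, integral_const] at this
    rw [← this]
    simp only [Measure.real, Measure.restrict_apply_univ]
    exact ENNReal.toReal_le_of_le_ofReal (by norm_num) hvol
  unfold lipArea
  rw [← setIntegral_congr_set hae]
  calc ∫ x in S, jac2 (mder φ x) ≤ ∫ x in S, Real.pi / 4 * K ^ 2 * |(fderiv ℝ Ψ x).det| := by
        apply integral_mono_of_nonneg
        · refine Eventually.of_forall fun x => ?_
          simp only [Pi.zero_apply, jac2]
          split_ifs <;> positivity
        · exact hint.const_mul _
        · refine (ae_restrict_iff' hSm).2 (Eventually.of_forall fun x hx => ?_)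
          exact jac_bound _ _ K hK (mder_bound φ Ψ K h x _ hx.2.hasFDerivAt)
    _ = Real.pi / 4 * K ^ 2 * ∫ x in S, |(fderiv ℝ Ψ x).det| := integral_const_mul _ _
    _ ≤ Real.pi / 4 * K ^ 2 * 4 := by gcongr
    _ = _ := by ring

lemma norm_mk_le (p : ℝ × ℝ) : ‖(⟨p.1, p.2⟩ : ℂ)‖ ≤ 2 * ‖p‖ := by
  have h := Complex.norm_le_abs_re_add_abs_im ⟨p.1, p.2⟩
  have h1 := norm_fst_le p
  have h2 := norm_snd_le p
  simp only [Real.norm_eq_abs] at h1 h2 h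
  linarith

lemma le_norm_mk (p : ℝ × ℝ) : ‖p‖ ≤ ‖(⟨p.1, p.2⟩ : ℂ)‖ := by
  rw [Prod.norm_def]
  exact max_le (Complex.abs_re_le_norm ⟨p.1, p.2⟩) (Complex.abs_im_le_norm ⟨p.1, p.2⟩)

lemma main_pos {Y : Type*} [NormedAddCommGroup Y] [NormedSpace ℝ Y] (γ : ℝ → Y) (K : ℝ≥0)
    (hK : LipschitzOnWith K γ (Set.Icc 0 1)) (hloop : γ 0 = γ 1) (L : ℝ) (hL : L = loopLength γ)
    (hLpos : 0 < L) : ∃ φ : ℝ × ℝ → Y, BoundsLoop φ γ ∧ lipArea φ ≤ 16 * Real.pi * L ^ 2 := by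
  have hpi := Real.pi_pos
  obtain ⟨V, hV0, hV1, hVd, hVL⟩ := exists_V γ K hK
  rw [← hL] at hV1
  have hVm : ∀ s t, 0 ≤ s → s ≤ t → t ≤ 1 → 0 ≤ V t - V s :=
    fun s t a b c => (norm_nonneg _).trans (hVd s t a b c)
  set W : ℝ → ℝ := fun t => (V t + L * t) / (2 * L) with hW
  have hWd : ∀ s t, W t - W s = ((V t - V s) + L * (t - s)) / (2 * L) := by
    intro s t; simp only [hW]; ring
  have hW0 : W 0 = 0 := by simp [hW, hV0]
  have hW1 : W 1 = 1 := by simp only [hW, hV1]; field_simp; norm_num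
  have hWlow : ∀ s t, 0 ≤ s → s ≤ t → t ≤ 1 → (t - s) ≤ 2 * (W t - W s) := by
    intro s t a b c
    rw [hWd, ← mul_div_assoc, le_div_iff₀ (by positivity)]
    nlinarith [hVm s t a b c]
  have hWV : ∀ s t, 0 ≤ s → s ≤ t → t ≤ 1 → V t - V s ≤ 2 * L * (W t - W s) := by
    intro s t a b c
    rw [hWd, mul_div_cancel₀ _ (by positivity)]
    nlinarith
  obtain ⟨KW, hKW, hWup⟩ : ∃ KW : ℝ, 0 ≤ KW ∧
      ∀ s t, 0 ≤ s → s ≤ t → t ≤ 1 → W t - W s ≤ KW * (t - s) := by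
    refine ⟨(K + L) / (2 * L), by positivity, fun s t a b c => ?_⟩
    rw [hWd, div_mul_eq_mul_div]
    gcongr
    linarith [hVL s t a b c]
  have hWI : ∀ s t, 0 ≤ s → s ≤ t → t ≤ 1 → 0 ≤ W t - W s ∧ W t - W s ≤ 1 := by
    intro s t a b c
    have h1 := hWlow s t a b c
    have h2 := hWlow 0 s le_rfl a (b.trans c)
    have h3 := hWlow t 1 (a.trans b) c le_rfl
    constructor <;> linarith
  -- circle estimates
  have cA := circ_lip γ W (2 * L) (by positivity) hWI
    (fun s t a b c => (hVd s t a b c).trans (hWV s t a b c)) (by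
      intro s t a b c
      have h1 := hVd 0 s le_rfl a (b.trans c)
      have h2 := hVd t 1 (a.trans b) c le_rfl
      have h3 := hWV 0 s le_rfl a (b.trans c)
      have h4 := hWV t 1 (a.trans b) c le_rfl
      have h5 : γ s - γ t = -(γ 0 - γ s) + -(γ t - γ 1) := by rw [hloop]; abel
      have h6 := norm_add_le (-(γ 0 - γ s)) (-(γ t - γ 1))
      rw [← h5, norm_neg, norm_neg] at h6
      rw [hW0] at h3
      rw [hW1] at h4
      linarith)
  have cB := circ_lip (fun s => ee (W s)) id (2 * Real.pi * KW) (by positivity)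
    (fun s t a b c => ⟨by simp only [id]; linarith, by simp only [id]; linarith⟩) (by
      intro s t a b c
      refine (ee_upper _ _ (by linarith [(hWI s t a b c).1])).trans ?_
      rw [mul_assoc (2 * Real.pi)]
      refine mul_le_mul_of_nonneg_left ?_ (by positivity)
      exact hWup s t a b c) (by
      intro s t a b c
      refine (ee_upper' _ _ (hWI s t a b c).2).trans ?_
      rw [mul_assoc (2 * Real.pi)]
      refine mul_le_mul_of_nonneg_left ?_ (by positivity)
      have h3 := hWup 0 s le_rfl a (b.trans c)
      have h4 := hWup t 1 (a.trans b) c le_rfl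
      simp only [id]
      linarith)
  have cC := circ_lip ee W (2 * Real.pi * 2) (by positivity) hWI (by
      intro s t a b c
      refine (ee_upper _ _ b).trans ?_
      rw [mul_assoc (2 * Real.pi)]
      refine mul_le_mul_of_nonneg_left ?_ (by positivity)
      exact hWlow s t a b c) (by
      intro s t a b c
      refine (ee_upper' _ _ (by linarith)).trans ?_
      rw [mul_assoc (2 * Real.pi)]
      refine mul_le_mul_of_nonneg_left ?_ (by positivity)
      have h3 := hWlow 0 s le_rfl a (b.trans c)
      have h4 := hWlow t 1 (a.trans b) c le_rfl
      linarith)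
  have hM : ∀ s ∈ Set.Icc (0:ℝ) 1, ‖γ s - γ 0‖ ≤ L := by
    intro s hs
    rw [norm_sub_rev]
    have := hVd 0 s le_rfl hs.1 hs.2
    have := hVm s 1 hs.1 hs.2 le_rfl
    linarith
  -- the complex maps
  set ψ : ℂ → ℂ := fun z => ‖z‖ • ee (W (ang z)) with hψ
  set f : ℂ → Y := fun z => γ 0 + ‖z‖ • (γ (ang z) - γ 0) with hf
  have hψn : ∀ z, ‖ψ z‖ = ‖z‖ := by
    intro z; simp only [hψ]; rw [norm_smul, norm_ee, norm_norm, mul_one]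
  have dA : ∀ z z', ‖f z - f z'‖ ≤ 2 * L * ‖ψ z - ψ z'‖ := by
    intro z z'
    have := cone_lip (γ (ang z) - γ 0) (γ (ang z') - γ 0) (ee (W (ang z))) (ee (W (ang z')))
      (norm_ee _) (norm_ee _) L (2 * L / 4) (by positivity) (hM _ (ang_mem z)) (hM _ (ang_mem z'))
      (by simpa using cA _ _ (ang_mem z) (ang_mem z')) ‖z‖ ‖z'‖ (norm_nonneg _) (norm_nonneg _)
    simp only [hf, hψ, add_sub_add_left_eq_sub]
    refine this.trans (le_of_eq ?_)
    ring
  obtain ⟨K1, hK1, dB⟩ : ∃ K1 : ℝ, 0 ≤ K1 ∧ ∀ z z', ‖ψ z - ψ z'‖ ≤ K1 * ‖z - z'‖ := by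
    refine ⟨1 + 2 * (2 * Real.pi * KW / 4), by positivity, fun z z' => ?_⟩
    have := cone_lip (ee (W (ang z))) (ee (W (ang z'))) (ee (ang z)) (ee (ang z'))
      (norm_ee _) (norm_ee _) 1 (2 * Real.pi * KW / 4) (by positivity) (norm_ee _).le (norm_ee _).le
      (cB _ _ (ang_mem z) (ang_mem z')) ‖z‖ ‖z'‖ (norm_nonneg _) (norm_nonneg _)
    rwa [ee_ang, ee_ang] at this
  have dC : Function.Injective ψ := by
    intro z z' hzz
    have := cone_lip (ee (ang z)) (ee (ang z')) (ee (W (ang z))) (ee (W (ang z')))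
      (norm_ee _) (norm_ee _) 1 (2 * Real.pi * 2 / 4) (by positivity) (norm_ee _).le (norm_ee _).le
      (cC _ _ (ang_mem z) (ang_mem z')) ‖z‖ ‖z'‖ (norm_nonneg _) (norm_nonneg _)
    rw [ee_ang, ee_ang] at this
    have h0 : ‖z‖ • ee (W (ang z)) - ‖z'‖ • ee (W (ang z')) = 0 := sub_eq_zero.2 hzz
    rw [h0, norm_zero, mul_zero] at this
    exact sub_eq_zero.1 (norm_le_zero_iff.1 this)
  set ι : ℝ × ℝ → ℂ := fun p => ⟨p.1, p.2⟩ with hι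
  set Ψ : ℝ × ℝ → ℝ × ℝ := fun p => ((ψ (ι p)).re, (ψ (ι p)).im) with hΨ
  have hιs : ∀ p q, ι p - ι q = ι (p - q) := by
    intro p q; apply Complex.ext <;> simp [hι]
  have hιΨ : ∀ p, ι (Ψ p) = ψ (ι p) := fun p => rfl
  have eA : ∀ x y, ‖f (ι x) - f (ι y)‖ ≤ 4 * L * ‖Ψ x - Ψ y‖ := by
    intro x y
    refine (dA _ _).trans ?_
    rw [← hιΨ, ← hιΨ, hιs]
    have := norm_mk_le (Ψ x - Ψ y)
    calc _ ≤ 2 * L * (2 * ‖Ψ x - Ψ y‖) := by gcongr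
      _ = _ := by ring
  have eB : LipschitzWith (Real.toNNReal (2 * K1)) Ψ := by
    apply LipschitzWith.of_dist_le_mul
    intro x y
    rw [dist_eq_norm, dist_eq_norm, Real.coe_toNNReal _ (by positivity)]
    refine (le_norm_mk _).trans ?_
    change ‖ι (Ψ x - Ψ y)‖ ≤ _
    rw [← hιs, hιΨ, hιΨ]
    refine (dB _ _).trans ?_
    rw [hιs]
    calc _ ≤ K1 * (2 * ‖x - y‖) := by gcongr; exact norm_mk_le _
      _ = _ := by ring
  have eC : Function.Injective Ψ := by
    intro x y hxy
    have h1 : ψ (ι x) = ψ (ι y) := by rw [← hιΨ, ← hιΨ, hxy]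
    have h2 := dC h1
    have h3 := congrArg Complex.re h2
    have h4 := congrArg Complex.im h2
    exact Prod.ext h3 h4
  have hD : ∀ p, p ∈ D2 ↔ ‖ι p‖ ^ 2 ≤ 1 := by
    intro p
    rw [Complex.sq_norm, Complex.normSq_apply]
    simp only [D2, Set.mem_setOf_eq, hι, sq]
  refine ⟨fun p => f (ι p), ⟨⟨Real.toNNReal (4 * L) * Real.toNNReal (2 * K1), ?_⟩, ?_⟩, ?_⟩
  · apply LipschitzWith.lipschitzOnWith
    apply LipschitzWith.of_dist_le_mul
    intro x y
    have h1 := eB.dist_le_mul x y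
    have h2 := eA x y
    rw [← dist_eq_norm, ← dist_eq_norm] at h2
    rw [NNReal.coe_mul, Real.coe_toNNReal (4 * L) (by positivity), mul_assoc]
    refine h2.trans ?_
    gcongr
  · intro s hs
    have h1 : ι (Real.cos (2 * Real.pi * s), Real.sin (2 * Real.pi * s)) = ee s := by
      unfold ee
      rw [mul_comm Complex.I, Complex.exp_mul_I]
      apply Complex.ext <;> simp [hι, ← Complex.ofReal_cos, ← Complex.ofReal_sin, -Complex.ofReal_mul]
    simp only [h1, hf, norm_ee, one_smul]
    have h2 := ee_ang (ee s)
    rw [norm_ee, one_smul] at h2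
    have h3 := cA (ang (ee s)) s (ang_mem _) hs
    have h4 := cB (ang (ee s)) s (ang_mem _) hs
    simp only [id, h2, sub_self, norm_zero, mul_zero] at h4
    have h5 := le_antisymm h4 (norm_nonneg _)
    rw [h5, mul_zero] at h3
    have h6 := sub_eq_zero.1 (norm_le_zero_iff.1 h3)
    rw [h6]; abel
  · refine (area_bound _ Ψ (4 * L) (by positivity) eA _ eB eC ?_).trans (le_of_eq (by ring))
    intro x hx
    rw [hD] at hx ⊢
    rwa [hιΨ, hψn]

/-- there is a universal constant `C > 0` such that in every real
Banach space `Y`, every Lipschitz loop `γ` bounds a singular Lipschitz disc of area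
at most `C·length(γ)²` (e.g. via the cone construction). -/
theorem banach_quadratic_isoperimetric :
    ∃ C > (0:ℝ), ∀ (Y : Type) [NormedAddCommGroup Y] [NormedSpace ℝ Y]
      [CompleteSpace Y], ∀ γ : ℝ → Y, IsLipLoop γ →
      ∃ φ : ℝ × ℝ → Y, BoundsLoop φ γ ∧ lipArea φ ≤ C * (loopLength γ) ^ 2 := by
  refine ⟨16 * Real.pi, by positivity, ?_⟩
  intro Y _ _ _ γ hγ
  obtain ⟨⟨K, hK⟩, hloop⟩ := hγ
  have hnn : 0 ≤ loopLength γ := ENNReal.toReal_nonneg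
  rcases hnn.lt_or_eq with hpos | h0
  · exact main_pos γ K hK hloop _ rfl hpos
  · obtain ⟨V, hV0, hV1, hVd, hVL⟩ := exists_V γ K hK
    refine ⟨fun _ => γ 0, ⟨⟨0, (LipschitzWith.const _).lipschitzOnWith⟩, ?_⟩, ?_⟩
    · intro s hs
      have h1 := hVd 0 s le_rfl hs.1 hs.2
      have h2 := (norm_nonneg _).trans (hVd s 1 hs.1 hs.2 le_rfl)
      have h3 : ‖γ 0 - γ s‖ ≤ 0 := by linarith
      exact sub_eq_zero.1 (norm_le_zero_iff.1 h3)
    · rw [← h0]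
      have hm : ∀ x v, mder (fun _ : ℝ × ℝ => γ 0) x v = 0 := by
        intro x v
        simp [mder]
      simp [lipArea, jac2, hm]

end SharpIsop
end

section
/- Let X be a geodesic metric space that is Gromov hyperbolic. Then there exists a constant C > 0 (depending only on X) such that every Lipschitz loop γ:[0,1]→X with γ(0)=γ(1) bounds a singular Lipschitz disc of area at most C·Lip(γ) in L^∞(X), where Lip(γ) denotes a Lipschitz constant of γ. In particular, loops in X admit fillings in L^∞(X) whose area is linear in the length of the loop. -/
open scoped NNReal ENNReal
open MeasureTheory Filter

universe u v

namespace SharpIsop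

section CxArea
open Complex Set Topology Metric

variable {E : Type u} [NormedAddCommGroup E] [NormedSpace ℝ E]

/-- metric derivative for maps from the complex plane -/
noncomputable def mdC (Φ : ℂ → E) (z v : ℂ) : ℝ :=
  Filter.limsup (fun r : ℝ => dist (Φ (z + r • v)) (Φ z) / r) (nhdsWithin 0 (Set.Ioi 0))

/-- Jacobian -/
noncomputable def jcC (Φ : ℂ → E) (z : ℂ) : ℝ :=
  if volume {v : ℂ | mdC Φ z v ≤ 1} < ⊤ then
    Real.pi / (volume {v : ℂ | mdC Φ z v ≤ 1}).toReal
  else 0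

/-- a loop on `[-π, π]` bounds a disc of area at most `A` -/
def Fill (c : ℝ → E) (A : ℝ≥0∞) : Prop :=
  ∃ (Φ : ℂ → E) (K : ℝ≥0), LipschitzOnWith K Φ (closedBall 0 1) ∧
    (∀ θ ∈ Icc (-Real.pi) Real.pi, Φ (Complex.exp (θ * I)) = c θ) ∧
    ∫⁻ z in closedBall (0:ℂ) 1, ENNReal.ofReal (jcC Φ z) ≤ A

lemma jcC_nonneg (Φ : ℂ → E) (z : ℂ) : 0 ≤ jcC Φ z := by
  unfold jcC; split_ifs <;> positivity

lemma mdC_congr {Φ Ψ : ℂ → E} {z : ℂ} (h : Φ =ᶠ[𝓝 z] Ψ) : mdC Φ z = mdC Ψ z := by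
  funext v
  unfold mdC
  apply Filter.limsup_congr
  have ht : Tendsto (fun r : ℝ => z + r • v) (𝓝[>] 0) (𝓝 z) := by
    have : Tendsto (fun r : ℝ => z + r • v) (𝓝 0) (𝓝 (z + (0:ℝ) • v)) := by
      apply Continuous.tendsto; fun_prop
    simp only [zero_smul, add_zero] at this
    exact this.mono_left nhdsWithin_le_nhds
  filter_upwards [ht.eventually h] with r hr
  rw [hr, h.self_of_nhds]

lemma jcC_congr {Φ Ψ : ℂ → E} {z : ℂ} (h : Φ =ᶠ[𝓝 z] Ψ) : jcC Φ z = jcC Ψ z := by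
  unfold jcC; rw [mdC_congr h]

lemma jcC_scale (Φ : ℂ → E) (z : ℂ) :
    jcC (fun w => Φ ((2:ℝ) • w)) z = 4 * jcC Φ ((2:ℝ) • z) := by
  have hm : ∀ v, mdC (fun w => Φ ((2:ℝ) • w)) z v = mdC Φ ((2:ℝ) • z) ((2:ℝ) • v) := by
    intro v
    unfold mdC
    congr 1; funext r
    simp only [smul_add, smul_comm (2:ℝ) r v]
  have hset : {v | mdC (fun w => Φ ((2:ℝ) • w)) z v ≤ 1} =
      (fun v => (2:ℝ) • v) ⁻¹' {v | mdC Φ ((2:ℝ) • z) v ≤ 1} := by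
    ext v; simp only [mem_ofPred_eq, mem_preimage, hm]
  have hv : volume {v | mdC (fun w => Φ ((2:ℝ) • w)) z v ≤ 1} =
      ENNReal.ofReal (1/4) * volume {v | mdC Φ ((2:ℝ) • z) v ≤ 1} := by
    rw [hset, Measure.addHaar_preimage_smul volume (by norm_num : (2:ℝ) ≠ 0)]
    congr 2
    rw [Complex.finrank_real_complex]; norm_num [abs_of_pos]
  unfold jcC
  rw [hv]
  by_cases ht : volume {v | mdC Φ ((2:ℝ) • z) v ≤ 1} < ⊤
  · rw [if_pos ht, if_pos (ENNReal.mul_lt_top ENNReal.ofReal_lt_top ht), ENNReal.toReal_mul,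
      ENNReal.toReal_ofReal (by norm_num)]
    generalize (volume {v | mdC Φ ((2:ℝ) • z) v ≤ 1}).toReal = x
    by_cases hx : x = 0
    · simp [hx]
    · field_simp
  · rw [if_neg ht, if_neg]
    · simp
    · rw [not_lt, top_le_iff] at ht ⊢
      rw [ht, ENNReal.mul_top]
      simp

lemma vol_rect (a b : ℝ) (ha : 0 ≤ a) (hb : 0 ≤ b) :
    volume {y : ℂ | |y.re| ≤ a ∧ |y.im| ≤ b} = ENNReal.ofReal (4 * a * b) := by
  have : {y : ℂ | |y.re| ≤ a ∧ |y.im| ≤ b} =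
      measurableEquivRealProd ⁻¹' (Icc (-a) a ×ˢ Icc (-b) b) := by
    ext y
    simp [abs_le, measurableEquivRealProd_apply]
    tauto
  rw [this, volume_preserving_equiv_real_prod.measure_preimage_equiv, Measure.volume_eq_prod,
    Measure.prod_prod, Real.volume_Icc, Real.volume_Icc, ← ENNReal.ofReal_mul (by linarith)]
  congr 1; ring

lemma jcC_le_of_pos (Φ : ℂ → E) (z : ℂ) (hz : z ≠ 0) (A B : ℝ) (hA : 0 < A) (hB : 0 < B)
    (h : ∀ v, mdC Φ z v ≤ A * |(v / z).re| + B * |(v / z).im|) :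
    jcC Φ z ≤ Real.pi * A * B / ‖z‖ ^ 2 := by
  have hz' : 0 < ‖z‖ := norm_pos_iff.2 hz
  have hu : ‖z / ‖z‖‖ = 1 := by
    rw [norm_div]; simp [hz]
  let uu : Circle := ⟨z / ‖z‖, by simp [Submonoid.unitSphere, hz]⟩
  have hmp := (rotation uu).measurePreserving
  have hsub : {y : ℂ | |y.re| ≤ ‖z‖ / (2 * A) ∧ |y.im| ≤ ‖z‖ / (2 * B)} ⊆
      (rotation uu) ⁻¹' {v | mdC Φ z v ≤ 1} := by
    rintro y ⟨h1, h2⟩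
    simp only [mem_preimage, mem_ofPred_eq, rotation_apply]
    refine (h _).trans ?_
    have e : (uu : ℂ) * y / z = ((‖z‖⁻¹ : ℝ) : ℂ) * y := by
      change z / ‖z‖ * y / z = _
      have : (‖z‖ : ℂ) ≠ 0 := by exact_mod_cast hz'.ne'
      push_cast
      field_simp
    rw [e, re_ofReal_mul, im_ofReal_mul, abs_mul, abs_mul, abs_of_pos (inv_pos.2 hz')]
    have h1' : A * (‖z‖⁻¹ * |y.re|) ≤ A * (‖z‖⁻¹ * (‖z‖ / (2 * A))) := by gcongr
    have h2' : B * (‖z‖⁻¹ * |y.im|) ≤ B * (‖z‖⁻¹ * (‖z‖ / (2 * B))) := by gcongr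
    have e1 : A * (‖z‖⁻¹ * (‖z‖ / (2 * A))) = 1/2 := by field_simp
    have e2 : B * (‖z‖⁻¹ * (‖z‖ / (2 * B))) = 1/2 := by field_simp
    linarith
  have hvol := measure_mono (μ := volume) hsub
  rw [hmp.measure_preimage_emb (rotation uu).toHomeomorph.measurableEmbedding,
    vol_rect _ _ (by positivity) (by positivity)] at hvol
  unfold jcC
  split_ifs with ht
  · have h3 : 4 * (‖z‖ / (2 * A)) * (‖z‖ / (2 * B)) ≤ (volume {v | mdC Φ z v ≤ 1}).toReal :=
      (ENNReal.ofReal_le_iff_le_toReal ht.ne).1 hvol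
    have h4 : 0 < 4 * (‖z‖ / (2 * A)) * (‖z‖ / (2 * B)) := by positivity
    calc Real.pi / (volume {v | mdC Φ z v ≤ 1}).toReal
        ≤ Real.pi / (4 * (‖z‖ / (2 * A)) * (‖z‖ / (2 * B))) := by gcongr
      _ = Real.pi * A * B / ‖z‖ ^ 2 := by field_simp; norm_num
  · positivity

lemma jcC_le (Φ : ℂ → E) (z : ℂ) (hz : z ≠ 0) (A B : ℝ) (hA : 0 ≤ A) (hB : 0 ≤ B)
    (h : ∀ ε > 0, ∀ v, mdC Φ z v ≤ (A + ε) * |(v / z).re| + (B + ε) * |(v / z).im|) :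
    jcC Φ z ≤ Real.pi * A * B / ‖z‖ ^ 2 := by
  have hlim : Tendsto (fun ε : ℝ => Real.pi * (A + ε) * (B + ε) / ‖z‖ ^ 2) (𝓝[>] 0)
      (𝓝 (Real.pi * (A + 0) * (B + 0) / ‖z‖ ^ 2)) := by
    apply Tendsto.mono_left _ nhdsWithin_le_nhds
    apply Continuous.tendsto; fun_prop
  simp only [add_zero] at hlim
  refine ge_of_tendsto hlim ?_
  filter_upwards [self_mem_nhdsWithin] with ε hε
  have hε' : (0:ℝ) < ε := hε
  exact jcC_le_of_pos Φ z hz _ _ (by linarith) (by linarith) (h ε hε)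

/-- local estimate in the annulus -/
lemma mdC_annulus (Γ Γ' : ℝ → E) (z : ℂ) (hz : z ∈ slitPlane) (h1 : 1/2 < ‖z‖) (h2 : ‖z‖ < 1)
    (q : ℝ) (hq : 0 ≤ q)
    (hL : ∀ ε > 0, ∀ᶠ t in 𝓝 (arg z), ‖Γ t - Γ (arg z)‖ ≤ (q + ε) * |t - arg z| ∧
      ‖Γ' t - Γ' (arg z)‖ ≤ (q + ε) * |t - arg z|)
    (Φ : ℂ → E)
    (hΦ : Φ =ᶠ[𝓝 z] fun w => Γ' (arg w) + (2 * ‖w‖ - 1) • (Γ (arg w) - Γ' (arg w))) :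
    ∀ ε > 0, ∀ v, mdC Φ z v ≤ (2 * ‖z‖ * ‖Γ (arg z) - Γ' (arg z)‖ + ε) * |(v / z).re|
      + (q + ε) * |(v / z).im| := by
  intro ε hε v
  have hz0 : z ≠ 0 := slitPlane_ne_zero hz
  rw [mdC_congr hΦ]
  set P := ‖Γ (arg z) - Γ' (arg z)‖ with hP
  have hcurve : HasDerivAt (fun r : ℝ => z + r • v) v 0 := by
    have : HasDerivAt (fun r : ℝ => r • v) ((1:ℝ) • v) 0 := (hasDerivAt_id (0:ℝ)).smul_const v
    simpa using this.const_add z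
  have hlog : HasDerivAt (fun r : ℝ => Complex.log (z + r • v)) (v / z) 0 := by
    have := hcurve.clog_real (by simpa using hz)
    simpa using this
  have hre : HasDerivAt (fun r : ℝ => Real.log ‖z + r • v‖) (v / z).re 0 := by
    have := (reCLM.hasFDerivAt (x := Complex.log (z + (0:ℝ) • v))).comp_hasDerivAt (0:ℝ) hlog
    simpa [Function.comp_def, log_re] using this
  have him : HasDerivAt (fun r : ℝ => arg (z + r • v)) (v / z).im 0 := by
    have := (imCLM.hasFDerivAt (x := Complex.log (z + (0:ℝ) • v))).comp_hasDerivAt (0:ℝ) hlog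
    simpa [Function.comp_def, log_im] using this
  have hcont : Tendsto (fun r : ℝ => z + r • v) (𝓝 0) (𝓝 z) := by
    simpa using hcurve.continuousAt.tendsto
  have hnorm : HasDerivAt (fun r : ℝ => ‖z + r • v‖) (‖z‖ * (v / z).re) 0 := by
    have h := hre.exp
    have he : (fun r : ℝ => Real.exp (Real.log ‖z + r • v‖)) =ᶠ[𝓝 0]
        fun r : ℝ => ‖z + r • v‖ := by
      filter_upwards [hcont.eventually_ne hz0] with r hr
      exact Real.exp_log (norm_pos_iff.2 hr)
    have h' := h.congr_of_eventuallyEq he.symm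
    simpa [Real.exp_log (norm_pos_iff.2 hz0)] using h'
  have harg : Tendsto (fun r : ℝ => arg (z + r • v)) (𝓝 0) (𝓝 (arg z)) := by
    simpa using him.continuousAt.tendsto
  have ht1 : Tendsto (fun r : ℝ => |(arg (z + r • v) - arg z) / r|) (𝓝[>] 0)
      (𝓝 |(v / z).im|) := by
    have := (him.tendsto_slope.mono_left (nhdsWithin_mono 0
      (fun x (hx : (0:ℝ) < x) => hx.ne'))).abs
    refine this.congr fun r => ?_
    simp [slope_def_field]
  have ht2 : Tendsto (fun r : ℝ => |(‖z + r • v‖ - ‖z‖) / r|) (𝓝[>] 0)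
      (𝓝 |‖z‖ * (v / z).re|) := by
    have := (hnorm.tendsto_slope.mono_left (nhdsWithin_mono 0
      (fun x (hx : (0:ℝ) < x) => hx.ne'))).abs
    refine this.congr fun r => ?_
    simp [slope_def_field]
  have htt : Tendsto (fun r : ℝ => (q + ε) * |(arg (z + r • v) - arg z) / r|
      + 2 * P * |(‖z + r • v‖ - ‖z‖) / r|) (𝓝[>] 0)
      (𝓝 ((q + ε) * |(v / z).im| + 2 * P * |‖z‖ * (v / z).re|)) :=
    (ht1.const_mul _).add (ht2.const_mul _)
  have hev : ∀ᶠ r in 𝓝[>] (0:ℝ),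
      dist (Γ' (arg (z + r • v)) + (2 * ‖z + r • v‖ - 1) • (Γ (arg (z + r • v)) - Γ' (arg (z + r • v))))
        (Γ' (arg z) + (2 * ‖z‖ - 1) • (Γ (arg z) - Γ' (arg z))) / r ≤
      (q + ε) * |(arg (z + r • v) - arg z) / r| + 2 * P * |(‖z + r • v‖ - ‖z‖) / r| := by
    have hn := (continuous_norm.tendsto z).comp hcont
    have e1 := (hn.eventually (eventually_gt_nhds h1)).filter_mono
      (nhdsWithin_le_nhds (s := Ioi (0:ℝ)))
    have e2 := (hn.eventually (eventually_lt_nhds h2)).filter_mono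
      (nhdsWithin_le_nhds (s := Ioi (0:ℝ)))
    have e3 := (harg.eventually (hL ε hε)).filter_mono
      (nhdsWithin_le_nhds (s := Ioi (0:ℝ)))
    filter_upwards [e1, e2, e3, self_mem_nhdsWithin] with r f1 f2 f3 hr
    have hr : 0 < r := hr
    simp only [Function.comp_apply] at f1 f2
    set w := z + r • v
    rw [abs_div, abs_div, abs_of_pos hr, mul_div_assoc', mul_div_assoc', ← add_div]
    gcongr
    rw [dist_eq_norm]
    have key : Γ' (arg w) + (2 * ‖w‖ - 1) • (Γ (arg w) - Γ' (arg w)) -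
        (Γ' (arg z) + (2 * ‖z‖ - 1) • (Γ (arg z) - Γ' (arg z))) =
        (2 - 2 * ‖w‖) • (Γ' (arg w) - Γ' (arg z)) + (2 * ‖w‖ - 1) • (Γ (arg w) - Γ (arg z))
        + (2 * (‖w‖ - ‖z‖)) • (Γ (arg z) - Γ' (arg z)) := by
      module
    rw [key]
    refine (norm_add_le _ _).trans ?_
    refine (add_le_add_left (norm_add_le _ _) _).trans ?_
    rw [norm_smul, norm_smul, norm_smul, Real.norm_eq_abs, Real.norm_eq_abs, Real.norm_eq_abs,
      abs_of_nonneg (by linarith : 0 ≤ 2 - 2 * ‖w‖), abs_of_nonneg (by linarith : 0 ≤ 2 * ‖w‖ - 1),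
      abs_mul, abs_two]
    have g1 := mul_le_mul_of_nonneg_left f3.2 (by linarith : 0 ≤ 2 - 2 * ‖w‖)
    have g2 := mul_le_mul_of_nonneg_left f3.1 (by linarith : 0 ≤ 2 * ‖w‖ - 1)
    rw [← hP]
    nlinarith
  have hfin : mdC (fun w => Γ' (arg w) + (2 * ‖w‖ - 1) • (Γ (arg w) - Γ' (arg w))) z v ≤
      (q + ε) * |(v / z).im| + 2 * P * |‖z‖ * (v / z).re| := by
    unfold mdC
    refine (Filter.limsup_le_limsup hev ?_ ?_).trans htt.limsup_eq.le
    · refine IsCoboundedUnder.of_frequently_ge (a := 0) ?_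
      apply Eventually.frequently
      filter_upwards [self_mem_nhdsWithin] with r hr
      exact div_nonneg dist_nonneg (le_of_lt hr)
    · exact htt.isBoundedUnder_le
  refine hfin.trans ?_
  rw [abs_mul, abs_of_nonneg (norm_nonneg z)]
  have := mul_nonneg hε.le (abs_nonneg (v / z).re)
  nlinarith
end CxArea
section StepLemma
open Complex Set Topology Metric

variable {E : Type u} [NormedAddCommGroup E] [NormedSpace ℝ E]

lemma circle_lip (Γ : ℝ → E) (K : ℝ≥0) (h : LipschitzOnWith K Γ (Icc (-Real.pi) Real.pi))
    (hc : Γ (-Real.pi) = Γ Real.pi) (z w : ℂ) (hz : ‖z‖ = 1) (hw : ‖w‖ = 1) :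
    ‖Γ (arg z) - Γ (arg w)‖ ≤ K * 2 * ‖z - w‖ := by
  have hpi := Real.pi_pos
  have hang := Complex.angle_le_mul_norm_sub hz hw
  have ez : z = Complex.exp (arg z * I) := by
    have := norm_mul_exp_arg_mul_I z
    rw [hz] at this; simpa using this.symm
  have ew : w = Complex.exp (arg w * I) := by
    have := norm_mul_exp_arg_mul_I w
    rw [hw] at this; simpa using this.symm
  have hA : InnerProductGeometry.angle z w =
      |toIocMod Real.two_pi_pos (-Real.pi) (arg z - arg w)| := by
    conv_lhs => rw [ez, ew]
    exact Complex.angle_exp_exp _ _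
  set a := arg z
  set b := arg w
  have ha1 : -Real.pi < a := neg_pi_lt_arg z
  have ha2 : a ≤ Real.pi := arg_le_pi z
  have hb1 : -Real.pi < b := neg_pi_lt_arg w
  have hb2 : b ≤ Real.pi := arg_le_pi w
  have hd : ∀ s ∈ Icc (-Real.pi) Real.pi, ∀ t ∈ Icc (-Real.pi) Real.pi,
      ‖Γ s - Γ t‖ ≤ K * |s - t| := by
    intro s hs t ht
    have := h.dist_le_mul s hs t ht
    rwa [dist_eq_norm, Real.dist_eq] at this
  have hK : (0:ℝ) ≤ K := K.2
  have main : ‖Γ a - Γ b‖ ≤ K * |toIocMod Real.two_pi_pos (-Real.pi) (a - b)| := by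
    have hx := toIocMod_mem_Ioc Real.two_pi_pos (-Real.pi) (a - b)
    have hx2 := toIocMod_add_toIocDiv_zsmul Real.two_pi_pos (-Real.pi) (a - b)
    set x := toIocMod Real.two_pi_pos (-Real.pi) (a - b)
    set n := toIocDiv Real.two_pi_pos (-Real.pi) (a - b)
    rw [zsmul_eq_mul] at hx2
    have hxl : -Real.pi < x := hx.1
    have hxr : x ≤ Real.pi := by have := hx.2; linarith
    have hn1 : (n:ℝ) < 2 := by
      by_contra hh; push Not at hh
      nlinarith
    have hn2 : (-2:ℝ) < n := by
      by_contra hh; push Not at hh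
      nlinarith
    have hn1' : n < 2 := by exact_mod_cast hn1
    have hn2' : -2 < n := by exact_mod_cast hn2
    have hpl : (-Real.pi) ∈ Icc (-Real.pi) Real.pi := ⟨le_rfl, by linarith⟩
    have hpr : Real.pi ∈ Icc (-Real.pi) Real.pi := ⟨by linarith, le_rfl⟩
    have ham : a ∈ Icc (-Real.pi) Real.pi := ⟨ha1.le, ha2⟩
    have hbm : b ∈ Icc (-Real.pi) Real.pi := ⟨hb1.le, hb2⟩
    have hcase : n = 0 ∨ n = 1 ∨ n = -1 := by omega
    rcases hcase with h0 | h0 | h0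
    · rw [h0] at hx2
      have : x = a - b := by simpa using hx2
      rw [this]; exact hd a ham b hbm
    · rw [h0] at hx2
      have hx3 : x = a - b - 2 * Real.pi := by push_cast at hx2; linarith
      have t1 := hd a ham _ hpr
      have t2 := hd _ hpl b hbm
      rw [hc] at t2
      rw [abs_of_nonpos (by linarith)] at t1 t2
      rw [abs_of_nonpos (by linarith)]
      have t3 := norm_sub_le_norm_sub_add_norm_sub (Γ a) (Γ Real.pi) (Γ b)
      nlinarith
    · rw [h0] at hx2
      have hx3 : x = a - b + 2 * Real.pi := by push_cast at hx2; linarith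
      have t1 := hd a ham _ hpl
      have t2 := hd _ hpr b hbm
      rw [← hc] at t2
      rw [abs_of_nonneg (by linarith)] at t1 t2
      rw [abs_of_nonneg (by linarith)]
      have t3 := norm_sub_le_norm_sub_add_norm_sub (Γ a) (Γ (-Real.pi)) (Γ b)
      nlinarith
  rw [← hA] at main
  have h4 : Real.pi / 2 ≤ 2 := by linarith [Real.pi_le_four]
  calc ‖Γ a - Γ b‖ ≤ K * InnerProductGeometry.angle z w := main
    _ ≤ K * (Real.pi / 2 * ‖z - w‖) := by gcongr
    _ ≤ K * (2 * ‖z - w‖) := by gcongr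
    _ = _ := by ring

lemma unit_lip (z w : ℂ) (hz : z ≠ 0) (hw : w ≠ 0) :
    ‖w‖ * ‖((‖z‖⁻¹ : ℝ) : ℂ) * z - ((‖w‖⁻¹ : ℝ) : ℂ) * w‖ ≤ 2 * ‖z - w‖ := by
  have hz' : 0 < ‖z‖ := norm_pos_iff.2 hz
  have hw' : 0 < ‖w‖ := norm_pos_iff.2 hw
  have hw2 : (‖w‖ : ℂ) ≠ 0 := by exact_mod_cast hw'.ne'
  have hz2 : (‖z‖ : ℂ) ≠ 0 := by exact_mod_cast hz'.ne'
  have e : (‖w‖ : ℂ) * (((‖z‖⁻¹ : ℝ) : ℂ) * z - ((‖w‖⁻¹ : ℝ) : ℂ) * w) =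
      ((‖w‖ - ‖z‖ : ℝ) : ℂ) * (((‖z‖⁻¹ : ℝ) : ℂ) * z) + (z - w) := by
    push_cast; field_simp; ring
  have e2 : ‖((‖z‖⁻¹ : ℝ) : ℂ) * z‖ = 1 := by
    rw [norm_mul]; simp [hz]
  calc _ = ‖(‖w‖ : ℂ) * (((‖z‖⁻¹ : ℝ) : ℂ) * z - ((‖w‖⁻¹ : ℝ) : ℂ) * w)‖ := by
        rw [norm_mul (‖w‖ : ℂ)]; simp
    _ ≤ |‖w‖ - ‖z‖| * 1 + ‖z - w‖ := by
        rw [e]; refine (norm_add_le _ _).trans ?_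
        rw [norm_mul, e2, norm_real, Real.norm_eq_abs]
    _ ≤ 2 * ‖z - w‖ := by
        have := abs_norm_sub_norm_le w z
        rw [norm_sub_rev] at this
        linarith

lemma arg_unit (z : ℂ) (hz : z ≠ 0) : arg (((‖z‖⁻¹ : ℝ) : ℂ) * z) = arg z :=
  arg_real_mul z (inv_pos.2 (norm_pos_iff.2 hz))

lemma norm_unit (z : ℂ) (hz : z ≠ 0) : ‖((‖z‖⁻¹ : ℝ) : ℂ) * z‖ = 1 := by
  rw [norm_mul]; simp [hz]

lemma hom_lip (Δ : ℝ → E) (K : ℝ≥0) (h : LipschitzOnWith K Δ (Icc (-Real.pi) Real.pi))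
    (hc : Δ (-Real.pi) = Δ Real.pi) :
    ∃ M : ℝ≥0, LipschitzWith M (fun z : ℂ => ‖z‖ • Δ (arg z)) := by
  have hpi := Real.pi_pos
  have hK : (0:ℝ) ≤ K := K.2
  set D : ℝ := ‖Δ Real.pi‖ + K * (2 * Real.pi) with hD
  have hD0 : 0 ≤ D := by positivity
  have hDb : ∀ z : ℂ, ‖Δ (arg z)‖ ≤ D := by
    intro z
    have := h.dist_le_mul (arg z) ⟨(neg_pi_lt_arg z).le, arg_le_pi z⟩ Real.pi
      ⟨by linarith, le_rfl⟩
    rw [dist_eq_norm, Real.dist_eq] at this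
    have h2 : |arg z - Real.pi| ≤ 2 * Real.pi := by
      rw [abs_le]; constructor <;> linarith [neg_pi_lt_arg z, arg_le_pi z]
    have h3 : ‖Δ (arg z)‖ ≤ ‖Δ Real.pi‖ + ‖Δ (arg z) - Δ Real.pi‖ := by
      have := norm_add_le (Δ Real.pi) (Δ (arg z) - Δ Real.pi)
      simpa using this
    have h4 : (K:ℝ) * |arg z - Real.pi| ≤ K * (2 * Real.pi) := by gcongr
    linarith
  refine ⟨⟨D + K * 4, by positivity⟩, LipschitzWith.of_dist_le_mul fun z w => ?_⟩
  change _ ≤ (D + K * 4) * _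
  rw [dist_eq_norm, dist_eq_norm]
  by_cases hz : z = 0
  · subst hz
    simp only [norm_zero, zero_smul, zero_sub, norm_neg, norm_smul, norm_norm]
    nlinarith [hDb w, norm_nonneg w, mul_nonneg hK (norm_nonneg w)]
  by_cases hw : w = 0
  · subst hw
    simp only [norm_zero, zero_smul, sub_zero, norm_smul, norm_norm]
    nlinarith [hDb z, norm_nonneg z, mul_nonneg hK (norm_nonneg z)]
  have h1 := circle_lip Δ K h hc _ _ (norm_unit z hz) (norm_unit w hw)
  rw [arg_unit z hz, arg_unit w hw] at h1
  have h2 := unit_lip z w hz hw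
  have e : ‖z‖ • Δ (arg z) - ‖w‖ • Δ (arg w) =
      (‖z‖ - ‖w‖) • Δ (arg z) + ‖w‖ • (Δ (arg z) - Δ (arg w)) := by module
  rw [e]
  refine (norm_add_le _ _).trans ?_
  rw [norm_smul, norm_smul, norm_norm, Real.norm_eq_abs]
  have h3 := mul_le_mul (abs_norm_sub_norm_le z w) (hDb z) (norm_nonneg _) (norm_nonneg _)
  have h4 := mul_le_mul_of_nonneg_left h1 (norm_nonneg w)
  have h5 := mul_le_mul_of_nonneg_left h2 (by positivity : (0:ℝ) ≤ K * 2)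
  nlinarith

/-- radial projection on the unit disc -/
noncomputable def rproj (z : ℂ) : ℂ := (max 1 ‖z‖)⁻¹ • z

lemma rproj_lip : LipschitzWith 2 rproj := by
  refine LipschitzWith.of_dist_le_mul fun z w => ?_
  rw [dist_eq_norm, dist_eq_norm]
  unfold rproj
  set m := max 1 ‖z‖ with hm
  set n := max 1 ‖w‖ with hn
  have m1 : 1 ≤ m := le_max_left _ _
  have n1 : 1 ≤ n := le_max_left _ _
  have hmn : |n - m| ≤ ‖z - w‖ := by
    have := abs_max_sub_max_le_max 1 ‖w‖ 1 ‖z‖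
    have h2 := abs_norm_sub_norm_le w z
    rw [norm_sub_rev] at h2
    refine this.trans ?_
    simp only [sub_self, abs_zero]
    exact max_le (norm_nonneg _) h2
  have e : m⁻¹ • z - n⁻¹ • w = m⁻¹ • (z - w) + (m⁻¹ - n⁻¹) • w := by module
  rw [e]
  refine (norm_add_le _ _).trans ?_
  rw [norm_smul, norm_smul, Real.norm_eq_abs, Real.norm_eq_abs, abs_of_pos (by positivity)]
  have h1 : m⁻¹ * ‖z - w‖ ≤ 1 * ‖z - w‖ := by
    gcongr; exact inv_le_one_of_one_le₀ m1
  have h2 : |m⁻¹ - n⁻¹| * ‖w‖ ≤ ‖z - w‖ := by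
    have e2 : m⁻¹ - n⁻¹ = (n - m) / (m * n) := by field_simp
    rw [e2, abs_div, abs_of_pos (by positivity : 0 < m * n), div_mul_eq_mul_div, div_le_iff₀ (by positivity)]
    have : ‖w‖ ≤ n := le_max_right _ _
    calc |n - m| * ‖w‖ ≤ ‖z - w‖ * n := by gcongr
      _ ≤ ‖z - w‖ * (m * n) := by gcongr; nlinarith
  have : ((2:ℝ≥0):ℝ) = 2 := rfl
  rw [this]; linarith

lemma rproj_norm_le (z : ℂ) : ‖rproj z‖ ≤ 1 := by
  unfold rproj
  rw [norm_smul, Real.norm_eq_abs, abs_of_pos (by positivity), inv_mul_le_iff₀ (by positivity)]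
  simp

/-- the glued disc -/
noncomputable def glue (φ' : ℂ → E) (Γ Γ' : ℝ → E) (z : ℂ) : E :=
  φ' (rproj ((2:ℝ) • z)) + (2:ℝ) • ((‖z‖ • (Γ (arg z) - Γ' (arg z))) -
    ‖(1/2:ℝ) • rproj ((2:ℝ) • z)‖ • (Γ (arg ((1/2:ℝ) • rproj ((2:ℝ) • z))) -
      Γ' (arg ((1/2:ℝ) • rproj ((2:ℝ) • z)))))

lemma glue_inner (φ' : ℂ → E) (Γ Γ' : ℝ → E) (z : ℂ) (hz : ‖z‖ ≤ 1/2) :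
    glue φ' Γ Γ' z = φ' ((2:ℝ) • z) := by
  have h : rproj ((2:ℝ) • z) = (2:ℝ) • z := by
    unfold rproj
    rw [max_eq_left, inv_one, one_smul]
    rw [norm_smul]; norm_num; linarith
  have h2 : (1/2:ℝ) • (2:ℝ) • z = z := by rw [smul_smul]; norm_num
  unfold glue
  rw [h, h2, sub_self, smul_zero, add_zero]

lemma glue_outer (φ' : ℂ → E) (Γ Γ' : ℝ → E)
    (hb : ∀ θ ∈ Icc (-Real.pi) Real.pi, φ' (Complex.exp (θ * I)) = Γ' θ)
    (z : ℂ) (hz : 1/2 ≤ ‖z‖) :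
    glue φ' Γ Γ' z = Γ' (arg z) + (2 * ‖z‖ - 1) • (Γ (arg z) - Γ' (arg z)) := by
  have hz0 : z ≠ 0 := by rintro rfl; norm_num at hz
  have hz' : 0 < ‖z‖ := norm_pos_iff.2 hz0
  have h : rproj ((2:ℝ) • z) = ((‖z‖⁻¹ : ℝ) : ℂ) * z := by
    unfold rproj
    have e : ‖(2:ℝ) • z‖ = 2 * ‖z‖ := by rw [norm_smul]; norm_num
    rw [e, max_eq_right (by linarith), smul_smul, real_smul]
    congr 2; field_simp
  have h1 : ((‖z‖⁻¹ : ℝ) : ℂ) * z = Complex.exp (arg z * I) := by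
    have := norm_mul_exp_arg_mul_I (((‖z‖⁻¹ : ℝ) : ℂ) * z)
    rw [norm_unit z hz0, arg_unit z hz0] at this
    simpa using this.symm
  have h3 : arg ((1/2:ℝ) • rproj ((2:ℝ) • z)) = arg z := by
    rw [h, real_smul, arg_real_mul _ (by norm_num), arg_unit z hz0]
  have h4 : ‖(1/2:ℝ) • rproj ((2:ℝ) • z)‖ = 1/2 := by
    rw [h, norm_smul, norm_unit z hz0]; norm_num
  unfold glue
  rw [h3, h4, h, h1, hb _ ⟨(neg_pi_lt_arg z).le, arg_le_pi z⟩]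
  module

lemma glue_lip (φ' : ℂ → E) (Γ Γ' : ℝ → E) (K K' : ℝ≥0)
    (hφ : LipschitzOnWith K' φ' (closedBall 0 1))
    (h : LipschitzOnWith K Γ (Icc (-Real.pi) Real.pi))
    (h' : LipschitzOnWith K Γ' (Icc (-Real.pi) Real.pi))
    (hc : Γ (-Real.pi) = Γ Real.pi) (hc' : Γ' (-Real.pi) = Γ' Real.pi) :
    ∃ M : ℝ≥0, LipschitzWith M (glue φ' Γ Γ') := by
  obtain ⟨M, hM⟩ := hom_lip (fun t => Γ t - Γ' t) (K + K) (h.sub h') (by simp only [hc, hc'])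
  have l2 : LipschitzWith ‖(2:ℝ)‖₊ (fun z : ℂ => (2:ℝ) • z) := lipschitzWith_smul (2:ℝ)
  have lp := rproj_lip.comp l2
  have lh := (lipschitzWith_smul (β := ℂ) (1/2:ℝ)).comp lp
  have a1 : LipschitzWith (K' * (2 * ‖(2:ℝ)‖₊)) (fun z => φ' (rproj ((2:ℝ) • z))) := by
    have := hφ.comp (lp.lipschitzOnWith (s := univ))
      (fun z _ => by simpa using rproj_norm_le _)
    exact lipschitzOnWith_univ.1 this
  have a2 := (lipschitzWith_smul (β := E) (2:ℝ)).comp (hM.sub (hM.comp lh))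
  exact ⟨_, a1.add a2⟩

lemma fill_step (Γ Γ' : ℝ → E) (K : ℝ≥0)
    (h : LipschitzOnWith K Γ (Icc (-Real.pi) Real.pi))
    (h' : LipschitzOnWith K Γ' (Icc (-Real.pi) Real.pi))
    (hc : Γ (-Real.pi) = Γ Real.pi) (hc' : Γ' (-Real.pi) = Γ' Real.pi)
    (q g : ℝ → ℝ) (hg : Measurable g)
    (hae : ∀ᵐ t : ℝ, t ∈ Ioo (-Real.pi) Real.pi → 0 ≤ q t ∧
      (∀ ε > 0, ∀ᶠ s in 𝓝 t, ‖Γ s - Γ t‖ ≤ (q t + ε) * |s - t| ∧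
        ‖Γ' s - Γ' t‖ ≤ (q t + ε) * |s - t|) ∧ ‖Γ t - Γ' t‖ * q t ≤ g t)
    (A : ℝ≥0∞) (hF : Fill Γ' A) :
    Fill Γ (A + ENNReal.ofReal (4 * Real.pi) *
      ∫⁻ t in Ioo (-Real.pi) Real.pi, ENNReal.ofReal (g t)) := by
  obtain ⟨φ', K', hφ, hb, hA⟩ := hF
  obtain ⟨M, hM⟩ := glue_lip φ' Γ Γ' K K' hφ h h' hc hc'
  refine ⟨glue φ' Γ Γ', M, hM.lipschitzOnWith, ?_, ?_⟩
  · intro θ hθ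
    have hn : ‖Complex.exp (θ * I)‖ = 1 := norm_exp_ofReal_mul_I θ
    rw [glue_outer φ' Γ Γ' hb _ (by rw [hn]; norm_num), hn]
    have e : (2 * 1 - 1 : ℝ) = 1 := by norm_num
    rw [e, one_smul, add_sub_cancel]
    rcases eq_or_lt_of_le hθ.1 with h1 | h1
    · rw [← h1, hc, Complex.arg_exp_mul_I]
      congr 1
      have := toIocMod_eq_iff Real.two_pi_pos (a := -Real.pi) (b := -Real.pi) (c := Real.pi)
      rw [this]
      refine ⟨⟨by linarith [Real.pi_pos], by linarith⟩, -1, ?_⟩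
      simp; ring
    · rw [Complex.exp_mul_I, arg_cos_add_sin_mul_I ⟨h1, hθ.2⟩]
  set J : ℂ → ℝ≥0∞ := fun z => ENNReal.ofReal (jcC (glue φ' Γ Γ') z) with hJ
  have hsub : closedBall (0:ℂ) (1/2) ⊆ closedBall 0 1 := closedBall_subset_closedBall (by norm_num)
  rw [← lintegral_inter_add_sdiff J (closedBall (0:ℂ) 1) (isClosed_closedBall.measurableSet
    (s := (closedBall (0:ℂ) (1/2)))), inter_eq_right.2 hsub]
  gcongr ?_ + ?_
  · refine le_trans (le_of_eq ?_) hA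
    have hae1 : ∀ᵐ z : ℂ, z ∉ sphere (0:ℂ) (1/2) := 
      measure_eq_zero_iff_ae_notMem.1 (Measure.addHaar_sphere (volume : Measure ℂ) 0 (1/2))
    have hfun : ∫⁻ z in closedBall (0:ℂ) (1/2), J z =
        ∫⁻ z in closedBall (0:ℂ) (1/2), ENNReal.ofReal 4 *
          ENNReal.ofReal (jcC φ' ((2:ℝ) • z)) := by
      refine setLIntegral_congr_fun_ae isClosed_closedBall.measurableSet ?_
      filter_upwards [hae1] with z hz hzz
      have hlt : ‖z‖ < 1/2 := by
        rw [mem_closedBall_zero_iff] at hzz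
        rw [mem_sphere_zero_iff_norm] at hz
        exact lt_of_le_of_ne hzz hz
      rw [hJ]
      simp only
      rw [← ENNReal.ofReal_mul (by norm_num), ← jcC_scale]
      congr 1
      apply jcC_congr
      have : ∀ᶠ w in 𝓝 z, ‖w‖ < 1/2 :=
        (continuous_norm.tendsto z).eventually (eventually_lt_nhds hlt)
      filter_upwards [this] with w hw
      exact glue_inner φ' Γ Γ' w hw.le
    rw [hfun, ← lintegral_indicator isClosed_closedBall.measurableSet,
      ← lintegral_indicator isClosed_closedBall.measurableSet]
    set F : ℂ → ℝ≥0∞ := (closedBall (0:ℂ) 1).indicator fun z => ENNReal.ofReal (jcC φ' z) with hFd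
    have hi : ((closedBall (0:ℂ) (1/2)).indicator fun z => ENNReal.ofReal 4 *
          ENNReal.ofReal (jcC φ' ((2:ℝ) • z))) = fun z => ENNReal.ofReal 4 * F ((2:ℝ) • z) := by
      funext z
      have hiff : (2:ℝ) • z ∈ closedBall (0:ℂ) 1 ↔ z ∈ closedBall (0:ℂ) (1/2) := by
        rw [mem_closedBall_zero_iff, mem_closedBall_zero_iff, norm_smul]
        norm_num
        constructor <;> intro <;> linarith
      by_cases hzz : z ∈ closedBall (0:ℂ) (1/2)
      · rw [indicator_of_mem hzz, hFd, indicator_of_mem (hiff.2 hzz)]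
      · rw [indicator_of_notMem hzz, hFd, indicator_of_notMem (fun hh => hzz (hiff.1 hh)), mul_zero]
    rw [hi, lintegral_const_mul' _ _ ENNReal.ofReal_ne_top]
    have hmap := Measure.map_addHaar_smul (volume : Measure ℂ) (r := 2) (by norm_num)
    have e1 : ∫⁻ z, F ((2:ℝ) • z) = ∫⁻ z, F z ∂(Measure.map (fun z : ℂ => (2:ℝ) • z) volume) := by
      exact (lintegral_map_equiv F (Homeomorph.smulOfNeZero (2:ℝ)
        two_ne_zero).toMeasurableEquiv).symm
    rw [e1]
    have hmap' : Measure.map (fun z : ℂ => (2:ℝ) • z) volume =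
        ENNReal.ofReal (1/4) • (volume : Measure ℂ) := by
      refine hmap.trans ?_
      congr 2
      rw [Complex.finrank_real_complex]; norm_num [abs_of_pos]
    rw [hmap', lintegral_smul_measure, smul_eq_mul, ← mul_assoc, ← ENNReal.ofReal_mul (by norm_num)]
    norm_num
  · have hmeas : MeasurableSet (closedBall (0:ℂ) 1 \ closedBall 0 (1/2)) :=
      isClosed_closedBall.measurableSet.diff isClosed_closedBall.measurableSet
    rw [← lintegral_indicator hmeas, ← Complex.lintegral_comp_polarCoord_symm]
    have hprod : (volume : Measure (ℝ × ℝ)).restrict (polarCoord.target) =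
        (volume.restrict (Ioi (0:ℝ))).prod (volume.restrict (Ioo (-Real.pi) Real.pi)) := by
      rw [polarCoord_target, Measure.volume_eq_prod, Measure.prod_restrict]
    rw [hprod]
    have hbound : ∀ᵐ p ∂((volume.restrict (Ioi (0:ℝ))).prod
        (volume.restrict (Ioo (-Real.pi) Real.pi))),
        ENNReal.ofReal p.1 • (closedBall (0:ℂ) 1 \ closedBall 0 (1/2)).indicator J
          (Complex.polarCoord.symm p) ≤
        (Ioo (1/2:ℝ) 1).indicator 1 p.1 * (ENNReal.ofReal (4 * Real.pi) * ENNReal.ofReal (g p.2)) := by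
      have q1 : ∀ᵐ r ∂(volume.restrict (Ioi (0:ℝ))), 0 < r ∧ r ≠ 1 := by
        have : ∀ᵐ r : ℝ, r ≠ 1 := by simp [ae_iff, measure_singleton]
        filter_upwards [ae_restrict_mem measurableSet_Ioi, ae_restrict_of_ae this] with r h1 h2
        exact ⟨h1, h2⟩
      have q2 := (ae_restrict_iff' (μ := volume) (measurableSet_Ioo (a := -Real.pi)
        (b := Real.pi))).2 hae
      have q3 := ae_restrict_mem (μ := volume) (measurableSet_Ioo (a := -Real.pi)
        (b := Real.pi))
      filter_upwards [Measure.quasiMeasurePreserving_fst.ae q1,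
        Measure.quasiMeasurePreserving_snd.ae q2,
        Measure.quasiMeasurePreserving_snd.ae q3] with p f1 f2 f3
      obtain ⟨r, t⟩ := p
      simp only at f1 f2 f3
      obtain ⟨hr0, hr1⟩ := f1
      set z := Complex.polarCoord.symm (r, t) with hz
      have hzn : ‖z‖ = r := by
        rw [hz, Complex.norm_polarCoord_symm, abs_of_pos hr0]
      have hza : arg z = t := by
        rw [hz, Complex.polarCoord_symm_apply]
        simp only [ofReal_cos, ofReal_sin]
        exact arg_mul_cos_add_sin_mul_I hr0 ⟨f3.1, f3.2.le⟩
      by_cases hmem : z ∈ closedBall (0:ℂ) 1 \ closedBall 0 (1/2)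
      · have hmem' := hmem
        rw [Set.mem_sdiff, mem_closedBall_zero_iff, mem_closedBall_zero_iff, hzn, not_le] at hmem'
        have hr2 : r < 1 := lt_of_le_of_ne hmem'.1 hr1
        rw [indicator_of_mem hmem, indicator_of_mem (show r ∈ Ioo (1/2:ℝ) 1 from ⟨hmem'.2, hr2⟩)]
        rw [hJ, smul_eq_mul]
        simp only [Pi.one_apply, one_mul]
        rw [← ENNReal.ofReal_mul hr0.le, ← ENNReal.ofReal_mul (by positivity)]
        apply ENNReal.ofReal_le_ofReal
        have hslit : z ∈ slitPlane := by
          rw [mem_slitPlane_iff_arg, hza]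
          refine ⟨f3.2.ne, ?_⟩
          intro h0; rw [h0, norm_zero] at hzn; linarith
        have hlow : 1/2 < ‖z‖ := by rw [hzn]; exact hmem'.2
        have hgl : glue φ' Γ Γ' =ᶠ[𝓝 z]
            fun w => Γ' (arg w) + (2 * ‖w‖ - 1) • (Γ (arg w) - Γ' (arg w)) := by
          have : ∀ᶠ w in 𝓝 z, 1/2 < ‖w‖ :=
            (continuous_norm.tendsto z).eventually (eventually_gt_nhds hlow)
          filter_upwards [this] with w hw
          exact glue_outer φ' Γ Γ' hb w hw.le
        have hmd := mdC_annulus Γ Γ' z hslit hlow (by rw [hzn]; exact hr2) (q t) f2.1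
          (by rw [hza]; exact f2.2.1) _ hgl
        have hj := jcC_le _ z (slitPlane_ne_zero hslit) _ _ (by positivity) f2.1 hmd
        rw [hza, hzn] at hj
        have hpi := Real.pi_pos
        have e : r * (Real.pi * (2 * r * ‖Γ t - Γ' t‖) * q t / r ^ 2) =
            2 * Real.pi * (‖Γ t - Γ' t‖ * q t) := by field_simp
        have hnn : 0 ≤ ‖Γ t - Γ' t‖ * q t := mul_nonneg (norm_nonneg _) f2.1
        have := mul_le_mul_of_nonneg_left hj hr0.le
        rw [e] at this
        refine this.trans ?_
        have := f2.2.2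
        nlinarith
      · rw [indicator_of_notMem hmem]; simp
    refine (lintegral_mono_ae hbound).trans ?_
    rw [lintegral_prod_mul (f := (Ioo (1/2:ℝ) 1).indicator 1)
      (g := fun t => ENNReal.ofReal (4 * Real.pi) * ENNReal.ofReal (g t))
      ((measurable_const.indicator measurableSet_Ioo).aemeasurable)
      ((hg.ennreal_ofReal.const_mul _).aemeasurable),
      lintegral_const_mul _ hg.ennreal_ofReal]
    have : ∫⁻ r in Ioi (0:ℝ), (Ioo (1/2:ℝ) 1).indicator 1 r ≤ 1 := by
      rw [lintegral_indicator_one measurableSet_Ioo]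
      refine (Measure.restrict_apply_le _ _).trans ?_
      rw [Real.volume_Ioo]
      rw [← ENNReal.ofReal_one]
      exact ENNReal.ofReal_le_ofReal (by norm_num)
    exact mul_le_of_le_one_left (by positivity) this

lemma fill_const (e : E) : Fill (fun _ => e) 0 := by
  refine ⟨fun _ => e, 0, LipschitzWith.const e |>.lipschitzOnWith, fun _ _ => rfl, ?_⟩
  have : ∀ z : ℂ, jcC (fun _ => e) z = 0 := by
    intro z
    have hm : ∀ v, mdC (fun _ : ℂ => e) z v = 0 := by
      intro v; unfold mdC; simp
    unfold jcC
    simp [hm]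
  simp [this]
end StepLemma
section Hyp
open Complex Set Topology Metric

lemma fill_transfer {E : Type u} [NormedAddCommGroup E] [NormedSpace ℝ E]
    (c γ : ℝ → E) (hγ : ∀ s ∈ Icc (0:ℝ) 1, γ s = c (2 * Real.pi * s - Real.pi))
    (A : ℝ) (hA : 0 ≤ A) (hF : Fill c (ENNReal.ofReal A)) :
    ∃ φ : ℝ × ℝ → E, BoundsLoop φ γ ∧ lipArea φ ≤ A := by
  obtain ⟨Φ, K, hK, hb, hI⟩ := hF
  let e : ℝ × ℝ ≃ᵐ ℂ := measurableEquivRealProd.symm.trans (MeasurableEquiv.neg ℂ)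
  have hmp : MeasurePreserving e volume volume :=
    (Measure.measurePreserving_neg (volume : Measure ℂ)).comp
      volume_preserving_equiv_real_prod.symm
  have he : ∀ p, e p = -(⟨p.1, p.2⟩ : ℂ) := fun p => rfl
  have hadd : ∀ x v : ℝ × ℝ, ∀ r : ℝ, e (x + r • v) = e x + r • e v := by
    intro x v r
    simp only [he]
    apply Complex.ext <;> simp <;> ring
  have hnsq : ∀ p, ‖e p‖ ^ 2 = p.1 ^ 2 + p.2 ^ 2 := by
    intro p
    rw [he, norm_neg, Complex.sq_norm, Complex.normSq_mk]; ring
  have hD : D2 = e ⁻¹' closedBall 0 1 := by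
    ext p
    rw [mem_preimage, mem_closedBall_zero_iff, ← sq_le_one_iff₀ (norm_nonneg _), hnsq]
    rfl
  have hmd : ∀ x v, mder (fun p => Φ (e p)) x v = mdC Φ (e x) (e v) := by
    intro x v
    unfold mder mdC
    simp only [hadd]
  have hj : ∀ x, jac2 (mder (fun p => Φ (e p)) x) = jcC Φ (e x) := by
    intro x
    have hs : {v | mder (fun p => Φ (e p)) x v ≤ 1} = e ⁻¹' {v | mdC Φ (e x) v ≤ 1} := by
      ext v; simp only [mem_ofPred_eq, mem_preimage, hmd]
    unfold jac2 jcC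
    rw [hs, hmp.measure_preimage_equiv]
  refine ⟨fun p => Φ (e p), ⟨⟨K * 2, ?_⟩, ?_⟩, ?_⟩
  · refine hK.comp (LipschitzWith.of_dist_le_mul (K := 2) fun p p' => ?_).lipschitzOnWith ?_
    · rw [dist_eq_norm, dist_eq_norm, he, he, neg_sub_neg]
      have h1 := Complex.norm_le_abs_re_add_abs_im (-(⟨p.1, p.2⟩ : ℂ) - -⟨p'.1, p'.2⟩)
      have h2 : |p.1 - p'.1| ≤ ‖p - p'‖ := norm_fst_le (p - p')
      have h3 : |p.2 - p'.2| ≤ ‖p - p'‖ := norm_snd_le (p - p')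
      rw [abs_sub_comm] at h2 h3
      simp only [sub_re, neg_re, sub_im, neg_im, neg_sub_neg] at h1
      have : ((2:ℝ≥0):ℝ) = 2 := rfl
      rw [this]; linarith
    · intro p hp; rw [hD] at hp; exact hp
  · intro s hs
    rw [hγ s hs, ← hb _ ⟨?_, ?_⟩]
    · change Φ (e _) = _
      congr 1
      rw [he]
      apply Complex.ext
      · rw [Complex.exp_ofReal_mul_I_re]; simp [Real.cos_sub_pi]
      · rw [Complex.exp_ofReal_mul_I_im]; simp [Real.sin_sub_pi]
    · nlinarith [Real.pi_pos, hs.1]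
    · nlinarith [Real.pi_pos, hs.2]
  · unfold lipArea
    simp only [hj]
    by_cases hm : AEStronglyMeasurable (fun x => jcC Φ (e x)) (volume.restrict D2)
    · rw [integral_eq_lintegral_of_nonneg_ae (Eventually.of_forall fun x => jcC_nonneg _ _) hm]
      refine ENNReal.toReal_le_of_le_ofReal hA (le_trans (le_of_eq ?_) hI)
      rw [hD]
      exact hmp.setLIntegral_comp_preimage_emb e.measurableEmbedding
        (fun z => ENNReal.ofReal (jcC Φ z)) _
    · rw [integral_non_aestronglyMeasurable hm]; exact hA

variable {X : Type u} [MetricSpace X]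

lemma kur_le (x₀ x y : X) : ‖kuratowski X x₀ x - kuratowski X x₀ y‖ ≤ dist x y := by
  refine lp.norm_le_of_forall_le dist_nonneg fun z => ?_
  change |(dist x z - dist x₀ z) - (dist y z - dist x₀ z)| ≤ _
  rw [sub_sub_sub_cancel_right]
  exact abs_dist_sub_le x y z

lemma geo_split {a b : X} {g : ℝ → X} (hg : IsGeodesicSeg a b g) {u : X}
    (hu : u ∈ g '' Icc (0:ℝ) (dist a b)) : dist a u + dist u b = dist a b := by
  obtain ⟨t, ht, rfl⟩ := hu
  have h0 : (0:ℝ) ∈ Icc (0:ℝ) (dist a b) := ⟨le_rfl, dist_nonneg⟩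
  have h1 : dist a b ∈ Icc (0:ℝ) (dist a b) := ⟨dist_nonneg, le_rfl⟩
  have e1 := hg.2.2 0 h0 t ht
  have e2 := hg.2.2 t ht _ h1
  rw [hg.1, abs_of_nonpos (by linarith [ht.1])] at e1
  rw [hg.2.1, abs_of_nonpos (by linarith [ht.2])] at e2
  linarith

lemma hyp_short (hX : GeodesicSpace X) (δ : ℝ)
    (hδ : ∀ x y z : X, ∀ gxy gyz gzx : ℝ → X,
      IsGeodesicSeg x y gxy → IsGeodesicSeg y z gyz → IsGeodesicSeg z x gzx →
      ∀ s ∈ Set.Icc (0:ℝ) (dist x y),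
        ∃ p ∈ gyz '' Set.Icc (0:ℝ) (dist y z) ∪ gzx '' Set.Icc (0:ℝ) (dist z x),
          dist (gxy s) p ≤ δ)
    (p x y z : X) (k : ℝ) (h1 : dist p y ≤ dist p x) (h2 : dist p z ≤ dist p x)
    (h3 : dist x y ≤ k) (h4 : dist x z ≤ k) : dist y z ≤ k + 4 * δ := by
  obtain ⟨g, hg⟩ := hX y z
  set l := dist y z / 2 with hl
  have hd : 0 ≤ dist y z := dist_nonneg
  have hlm : l ∈ Icc (0:ℝ) (dist y z) := ⟨by linarith, by linarith⟩
  have hwy : dist y (g l) = l := by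
    have := hg.2.2 0 ⟨le_rfl, hd⟩ l hlm
    rw [hg.1, abs_of_nonpos (by linarith [hlm.1])] at this; linarith
  have hwz : dist (g l) z = l := by
    have := hg.2.2 l hlm _ ⟨hd, le_rfl⟩
    rw [hg.2.1, abs_of_nonpos (by linarith [hlm.2])] at this; linarith
  have key : ∀ (q : X) (M : ℝ), dist q y ≤ M → dist q z ≤ M → dist q (g l) ≤ M - l + 2 * δ := by
    intro q M hy hz
    obtain ⟨g1, hg1⟩ := hX z q
    obtain ⟨g2, hg2⟩ := hX q y
    obtain ⟨u, hu, hud⟩ := hδ y z q g g1 g2 hg hg1 hg2 l hlm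
    rcases hu with hu | hu
    · have := geo_split hg1 hu
      have t1 := dist_triangle (g l) u z
      have t2 := dist_triangle q u (g l)
      rw [dist_comm u z] at t1
      rw [dist_comm q u, dist_comm u (g l)] at t2
      rw [dist_comm z q] at this
      linarith
    · have := geo_split hg2 hu
      have t1 := dist_triangle y u (g l)
      have t2 := dist_triangle q u (g l)
      rw [dist_comm u (g l)] at t1 t2
      rw [dist_comm y u] at t1
      linarith
  have a1 := key p _ h1 h2
  have a2 := key x _ h3 h4
  have t := dist_triangle p (g l) x
  rw [dist_comm (g l) x] at t
  linarith

/-- the curve `c` is controlled by the density `w` -/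
def Ctrl (c : ℝ → X) (w : ℝ → ℝ) (a b : ℝ) : Prop :=
  ∀ s t, a ≤ s → s ≤ t → t ≤ b → dist (c s) (c t) ≤ ∫ u in s..t, w u

/-- admissible densities -/
def Dens (w : ℝ → ℝ) (W : ℝ) : Prop := Measurable w ∧ (∀ t, 0 ≤ w t) ∧ ∀ t, w t ≤ W

lemma Dens.ii {w : ℝ → ℝ} {W : ℝ} (h : Dens w W) (a b : ℝ) :
    IntervalIntegrable w volume a b := by
  refine (intervalIntegrable_const (c := W)).mono_fun h.1.aestronglyMeasurable ?_
  refine Eventually.of_forall fun t => ?_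
  have hW : 0 ≤ W := (h.2.1 0).trans (h.2.2 0)
  change ‖w t‖ ≤ ‖W‖
  rw [Real.norm_of_nonneg (h.2.1 t), Real.norm_of_nonneg hW]
  exact h.2.2 t

lemma Dens.lint {w : ℝ → ℝ} {W : ℝ} (h : Dens w W) {a b : ℝ} (hab : a ≤ b) :
    ∫⁻ t in Ioc a b, ENNReal.ofReal (w t) = ENNReal.ofReal (∫ t in a..b, w t) := by
  rw [intervalIntegral.integral_of_le hab, ofReal_integral_eq_lintegral_ofReal]
  · exact (intervalIntegrable_iff_integrableOn_Ioc_of_le hab).1 (h.ii a b)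
  · exact Eventually.of_forall h.2.1

lemma Dens.add {w w' : ℝ → ℝ} {W W' : ℝ} (h : Dens w W) (h' : Dens w' W') :
    Dens (fun t => w t + w' t) (W + W') :=
  ⟨h.1.add h'.1, fun t => add_nonneg (h.2.1 t) (h'.2.1 t), fun t => add_le_add (h.2.2 t) (h'.2.2 t)⟩

lemma Dens.smul {w : ℝ → ℝ} {W : ℝ} (h : Dens w W) {r : ℝ} (hr : 0 ≤ r) :
    Dens (fun t => r * w t) (r * W) :=
  ⟨h.1.const_mul r, fun t => mul_nonneg hr (h.2.1 t), fun t => mul_le_mul_of_nonneg_left (h.2.2 t) hr⟩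

lemma Dens.int_nonneg {w : ℝ → ℝ} {W : ℝ} (h : Dens w W) {a b : ℝ} (hab : a ≤ b) :
    0 ≤ ∫ t in a..b, w t :=
  intervalIntegral.integral_nonneg hab fun t _ => h.2.1 t

lemma Ctrl.concat {c : ℝ → X} {w : ℝ → ℝ} {W : ℝ} (hw : Dens w W) {a b d : ℝ}
    (h1 : Ctrl c w a b) (h2 : Ctrl c w b d) : Ctrl c w a d := by
  intro s t hs hst ht
  rcases le_total t b with htb | htb
  · exact h1 s t hs hst htb
  rcases le_total b s with hsb | hsb
  · exact h2 s t hsb hst ht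
  have e := intervalIntegral.integral_add_adjacent_intervals (hw.ii s b) (hw.ii b t)
  rw [← e]
  exact (dist_triangle _ (c b) _).trans (add_le_add (h1 s b hs hsb le_rfl) (h2 b t le_rfl htb ht))

lemma Ctrl.lip {c : ℝ → X} {w : ℝ → ℝ} {W : ℝ} (hw : Dens w W) {a b : ℝ}
    (h : Ctrl c w a b) (x₀ : X) :
    LipschitzOnWith W.toNNReal (fun t => kuratowski X x₀ (c t)) (Icc a b) := by
  have hW : 0 ≤ W := (hw.2.1 0).trans (hw.2.2 0)
  have key : ∀ s ∈ Icc a b, ∀ t ∈ Icc a b, s ≤ t →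
      dist (kuratowski X x₀ (c s)) (kuratowski X x₀ (c t)) ≤ W * |s - t| := by
    intro s hs t ht hst
    rw [dist_eq_norm]
    refine (kur_le x₀ _ _).trans ((h s t hs.1 hst ht.2).trans ?_)
    have := intervalIntegral.integral_mono_on hst (hw.ii s t)
      (intervalIntegrable_const (c := W)) fun x _ => hw.2.2 x
    rw [intervalIntegral.integral_const, smul_eq_mul] at this
    rw [abs_of_nonpos (by linarith)]
    linarith
  refine LipschitzOnWith.of_dist_le_mul fun s hs t ht => ?_
  rw [Real.coe_toNNReal _ hW, Real.dist_eq]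
  rcases le_total s t with hst | hst
  · exact key s hs t ht hst
  · rw [dist_comm, abs_sub_comm]; exact key t ht s hs hst

lemma Ctrl.loc {c : ℝ → X} {w : ℝ → ℝ} {W : ℝ} (hw : Dens w W) {a b : ℝ}
    (h : Ctrl c w a b) (x₀ : X) :
    ∀ᵐ t : ℝ, t ∈ Ioo a b → ∀ ε > 0, ∀ᶠ s in 𝓝 t,
      ‖kuratowski X x₀ (c s) - kuratowski X x₀ (c t)‖ ≤ (w t + ε) * |s - t| := by
  have hloc : LocallyIntegrable w volume := by
    have hc : LocallyIntegrable (fun _ : ℝ => W) volume := continuous_const.locallyIntegrable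
    refine hc.mono hw.1.aestronglyMeasurable (Eventually.of_forall fun t => ?_)
    have hW : 0 ≤ W := (hw.2.1 0).trans (hw.2.2 0)
    rw [Real.norm_of_nonneg (hw.2.1 t), Real.norm_of_nonneg hW]
    exact hw.2.2 t
  filter_upwards [_root_.LocallyIntegrable.ae_hasDerivAt_integral hloc] with t ht hta ε hε
  have hd := ht a
  have ho := (hasDerivAt_iff_isLittleO.1 hd).def hε
  filter_upwards [ho, Ioo_mem_nhds hta.1 hta.2] with s hs hsa
  rw [smul_eq_mul, Real.norm_eq_abs, Real.norm_eq_abs,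
    intervalIntegral.integral_interval_sub_left (hw.ii a s) (hw.ii a t)] at hs
  refine (kur_le x₀ _ _).trans ?_
  rcases le_total s t with hst | hst
  · have h1 := h s t hsa.1.le hst hta.2.le
    rw [intervalIntegral.integral_symm] at hs
    rw [abs_of_nonpos (by linarith : s - t ≤ 0)] at hs ⊢
    have := (abs_le.1 hs).1
    nlinarith
  · have h1 := h t s hta.1.le hst hsa.2.le
    rw [dist_comm] at h1
    rw [abs_of_nonneg (by linarith : 0 ≤ s - t)] at hs ⊢
    have := (abs_le.1 hs).2
    nlinarith

lemma surgery (hX : GeodesicSpace X) {c : ℝ → X} {w : ℝ → ℝ} {W l r : ℝ} (hw : Dens w W)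
    (hc : Ctrl c w l r) (hcl : c l = c r) {a b V : ℝ} (ha : l ≤ a) (hab : a < b) (hb : b ≤ r)
    (hV : dist (c a) (c b) ≤ V) :
    ∃ (c' : ℝ → X) (w' : ℝ → ℝ) (W' : ℝ), Dens w' W' ∧ Ctrl c' w' l r ∧ c' l = c' r ∧
      (∀ t, t ∉ Ioc a b → c' t = c t) ∧ (∫ u in a..b, w' u) = V ∧
      (∫ u in l..r, w' u) = (∫ u in l..r, w u) - (∫ u in a..b, w u) + V := by
  obtain ⟨g, hg⟩ := hX (c a) (c b)
  set d := dist (c a) (c b) with hd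
  have hd0 : 0 ≤ d := dist_nonneg
  have hV0 : 0 ≤ V := hd0.trans hV
  have hba : 0 < b - a := by linarith
  classical
  let c' : ℝ → X := fun t => if t ∈ Ioc a b then g (d * (t - a) / (b - a)) else c t
  let w' : ℝ → ℝ := fun t => if t ∈ Ioc a b then V / (b - a) else w t
  have hw' : Dens w' (max W (V / (b - a))) := by
    refine ⟨Measurable.ite measurableSet_Ioc measurable_const hw.1, fun t => ?_, fun t => ?_⟩
    · simp only [w']; split_ifs
      · positivity
      · exact hw.2.1 t
    · simp only [w']; split_ifs
      · exact le_max_right _ _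
      · exact (hw.2.2 t).trans (le_max_left _ _)
  have hc'out : ∀ t, t ∉ Ioc a b → c' t = c t := fun t ht => if_neg ht
  have hc'in : ∀ t ∈ Icc a b, c' t = g (d * (t - a) / (b - a)) := by
    intro t ht
    rcases eq_or_lt_of_le ht.1 with h | h
    · rw [hc'out t (by rw [← h]; simp), ← h]; simp [hg.1]
    · exact if_pos ⟨h, ht.2⟩
  have hc'b : c' b = c b := by
    rw [hc'in b ⟨hab.le, le_rfl⟩, mul_div_assoc, div_self hba.ne', mul_one]; exact hg.2.1
  have hc'R : ∀ t, b ≤ t → c' t = c t := by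
    intro t ht
    rcases eq_or_lt_of_le ht with h | h
    · rw [← h, hc'b]
    · exact hc'out t fun hh => absurd hh.2 (by linarith)
  have hc'L : ∀ t, t ≤ a → c' t = c t := fun t ht => hc'out t fun hh => absurd hh.1 (by linarith)
  have iL : ∀ s t, s ≤ t → t ≤ a → (∫ u in s..t, w' u) = ∫ u in s..t, w u := by
    intro s t hst hta
    rw [intervalIntegral.integral_of_le hst, intervalIntegral.integral_of_le hst]
    refine setIntegral_congr_fun measurableSet_Ioc fun u hu => ?_
    exact if_neg fun hh => absurd hh.1 (by linarith [hu.2])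
  have iR : ∀ s t, s ≤ t → b ≤ s → (∫ u in s..t, w' u) = ∫ u in s..t, w u := by
    intro s t hst hta
    rw [intervalIntegral.integral_of_le hst, intervalIntegral.integral_of_le hst]
    refine setIntegral_congr_fun measurableSet_Ioc fun u hu => ?_
    exact if_neg fun hh => absurd hh.2 (by linarith [hu.1])
  have iM : ∀ s t, s ≤ t → a ≤ s → t ≤ b → (∫ u in s..t, w' u) = V / (b - a) * (t - s) := by
    intro s t hst has htb
    have : (∫ u in s..t, w' u) = ∫ u in s..t, V / (b - a) := by
      rw [intervalIntegral.integral_of_le hst, intervalIntegral.integral_of_le hst]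
      refine setIntegral_congr_fun measurableSet_Ioc fun u hu => ?_
      exact if_pos ⟨by linarith [hu.1], by linarith [hu.2]⟩
    rw [this, intervalIntegral.integral_const, smul_eq_mul, mul_comm]
  have hMV : (∫ u in a..b, w' u) = V := by
    rw [iM a b hab.le le_rfl le_rfl]; field_simp
  refine ⟨c', w', _, hw', ?_, ?_, hc'out, hMV, ?_⟩
  · have c1 : Ctrl c' w' l a := by
      intro s t hs hst ht
      rw [iL s t hst ht, hc'L s (by linarith), hc'L t ht]
      exact hc s t hs hst (by linarith)
    have c2 : Ctrl c' w' a b := by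
      intro s t hs hst ht
      have hmem : ∀ x ∈ Icc a b, d * (x - a) / (b - a) ∈ Icc (0:ℝ) d := by
        intro x hx
        have : 0 ≤ x - a := by linarith [hx.1]
        refine ⟨by positivity, ?_⟩
        rw [div_le_iff₀ hba]
        exact mul_le_mul_of_nonneg_left (by linarith [hx.2]) hd0
      have hsm : s ∈ Icc a b := ⟨hs, by linarith⟩
      have htm : t ∈ Icc a b := ⟨by linarith, ht⟩
      rw [iM s t hst hs ht, hc'in s hsm, hc'in t htm, hg.2.2 _ (hmem s hsm) _ (hmem t htm)]
      have e : d * (s - a) / (b - a) - d * (t - a) / (b - a) = - (d / (b - a) * (t - s)) := by ring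
      have hts : 0 ≤ t - s := by linarith
      rw [e, abs_neg, abs_of_nonneg (by positivity)]
      gcongr
    have c3 : Ctrl c' w' b r := by
      intro s t hs hst ht
      rw [iR s t hst hs, hc'R s hs, hc'R t (by linarith)]
      exact hc s t (by linarith) hst ht
    exact (c1.concat hw' c2).concat hw' c3
  · rw [hc'L l ha, hc'R r hb, hcl]
  · have e1 := intervalIntegral.integral_add_adjacent_intervals (hw'.ii l a) (hw'.ii a b)
    have e2 := intervalIntegral.integral_add_adjacent_intervals (hw'.ii l b) (hw'.ii b r)
    have e3 := intervalIntegral.integral_add_adjacent_intervals (hw.ii l a) (hw.ii a b)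
    have e4 := intervalIntegral.integral_add_adjacent_intervals (hw.ii l b) (hw.ii b r)
    rw [iL l a ha le_rfl] at e1
    rw [iR b r hb le_rfl] at e2
    linarith

lemma Fill.mono {E : Type u} [NormedAddCommGroup E] {c : ℝ → E} {A B : ℝ≥0∞}
    (h : Fill c A) (hAB : A ≤ B) : Fill c B := by
  obtain ⟨Φ, K, h1, h2, h3⟩ := h
  exact ⟨Φ, K, h1, h2, h3.trans hAB⟩

lemma fill_near (x₀ : X) {c : ℝ → X} {w : ℝ → ℝ} {W k : ℝ} (hk : 0 ≤ k) (hw : Dens w W)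
    (hc : Ctrl c w (-Real.pi) Real.pi) (hcl : c (-Real.pi) = c Real.pi)
    (hnear : ∀ t ∈ Icc (-Real.pi) Real.pi, dist (c (-Real.pi)) (c t) ≤ k) :
    Fill (fun t => kuratowski X x₀ (c t))
      (ENNReal.ofReal (4 * Real.pi * k * ∫ u in (-Real.pi)..Real.pi, w u)) := by
  have hpi := Real.pi_pos
  have hs := fill_step (fun t => kuratowski X x₀ (c t)) (fun _ => kuratowski X x₀ (c (-Real.pi)))
    W.toNNReal (hc.lip hw x₀) ((LipschitzWith.const' _).lipschitzOnWith)
    (by simp only [hcl]) rfl w (fun t => k * w t) (hw.1.const_mul k) ?_ 0 (fill_const _)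
  · refine hs.mono ?_
    rw [zero_add]
    have h1 : ∫⁻ t in Ioo (-Real.pi) Real.pi, ENNReal.ofReal (k * w t) ≤
        ENNReal.ofReal (∫ u in (-Real.pi)..Real.pi, k * w u) := by
      rw [← (hw.smul hk).lint (by linarith)]
      exact lintegral_mono_set Ioo_subset_Ioc_self
    refine (mul_le_mul_right h1 _).trans (le_of_eq ?_)
    rw [← ENNReal.ofReal_mul (by positivity), intervalIntegral.integral_const_mul]
    congr 1; ring
  · filter_upwards [hc.loc hw x₀] with t ht htm
    refine ⟨hw.2.1 t, fun ε hε => ?_, ?_⟩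
    · filter_upwards [ht htm ε hε] with s hs
      refine ⟨hs, ?_⟩
      have := hw.2.1 t
      simp only [sub_self, norm_zero]
      positivity
    · refine mul_le_mul_of_nonneg_right ?_ (hw.2.1 t)
      refine (kur_le x₀ _ _).trans ?_
      rw [dist_comm]
      exact hnear t ⟨htm.1.le, htm.2.le⟩

lemma fill_ind (x₀ : X) (hX : GeodesicSpace X) (δ : ℝ) (hδ0 : 0 ≤ δ)
    (hδ : ∀ x y z : X, ∀ gxy gyz gzx : ℝ → X,
      IsGeodesicSeg x y gxy → IsGeodesicSeg y z gyz → IsGeodesicSeg z x gzx →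
      ∀ s ∈ Set.Icc (0:ℝ) (dist x y),
        ∃ p ∈ gyz '' Set.Icc (0:ℝ) (dist y z) ∪ gzx '' Set.Icc (0:ℝ) (dist z x),
          dist (gxy s) p ≤ δ) (k : ℝ) (hk : k = 4 * δ + 1) (n : ℕ) :
    ∀ (c : ℝ → X) (w : ℝ → ℝ) (W : ℝ), Dens w W → Ctrl c w (-Real.pi) Real.pi →
      c (-Real.pi) = c Real.pi → (∫ u in (-Real.pi)..Real.pi, w u) ≤ n →
      Fill (fun t => kuratowski X x₀ (c t))
        (ENNReal.ofReal (4 * Real.pi * (16 * k ^ 2) * ∫ u in (-Real.pi)..Real.pi, w u)) := by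
  have hpi := Real.pi_pos
  have hk1 : 1 ≤ k := by linarith
  induction n with
  | zero =>
    intro c w W hw hc hcl hn
    have h0 := hw.int_nonneg (by linarith : -Real.pi ≤ Real.pi)
    refine (fill_near x₀ (by linarith : 0 ≤ k) hw hc hcl ?_).mono ?_
    · intro t ht
      have h1 := hc _ t le_rfl ht.1 ht.2
      have h2 := intervalIntegral.integral_add_adjacent_intervals (hw.ii (-Real.pi) t)
        (hw.ii t Real.pi)
      have h3 := hw.int_nonneg ht.2
      push_cast at hn
      linarith
    · apply ENNReal.ofReal_le_ofReal
      gcongr; nlinarith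
  | succ n ih =>
    intro c w W hw hc hcl hn
    have h0 := hw.int_nonneg (by linarith : -Real.pi ≤ Real.pi)
    by_cases hnear : ∀ t ∈ Icc (-Real.pi) Real.pi, dist (c (-Real.pi)) (c t) ≤ k
    · refine (fill_near x₀ (by linarith : 0 ≤ k) hw hc hcl hnear).mono ?_
      apply ENNReal.ofReal_le_ofReal
      gcongr; nlinarith
    push Not at hnear
    obtain ⟨t₀, ht₀, hfar⟩ := hnear
    have hW : 0 ≤ W := (hw.2.1 0).trans (hw.2.2 0)
    have hle : ∀ s t, s ≤ t → (∫ u in s..t, w u) ≤ W * (t - s) := by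
      intro s t hst
      have := intervalIntegral.integral_mono_on hst (hw.ii s t)
        (intervalIntegrable_const (c := W)) fun x _ => hw.2.2 x
      rw [intervalIntegral.integral_const, smul_eq_mul] at this
      linarith
    have hcont : ContinuousOn c (Icc (-Real.pi) Real.pi) := by
      have : LipschitzOnWith W.toNNReal c (Icc (-Real.pi) Real.pi) := by
        refine LipschitzOnWith.of_dist_le_mul fun s hs t ht => ?_
        rw [Real.coe_toNNReal _ hW, Real.dist_eq]
        rcases le_total s t with hst | hst
        · rw [abs_of_nonpos (by linarith)]
          have := hc s t hs.1 hst ht.2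
          have := hle s t hst
          linarith
        · rw [dist_comm, abs_of_nonneg (by linarith)]
          have := hc t s ht.1 hst hs.2
          have := hle t s hst
          linarith
      exact this.continuousOn
    obtain ⟨m, hm, hmax⟩ := isCompact_Icc.exists_isMaxOn (f := fun t => dist (c (-Real.pi)) (c t))
      ⟨t₀, ht₀⟩ (by fun_prop)
    have hmax' : ∀ t ∈ Icc (-Real.pi) Real.pi,
        dist (c (-Real.pi)) (c t) ≤ dist (c (-Real.pi)) (c m) := fun t ht => hmax ht
    have hmk : k < dist (c (-Real.pi)) (c m) := hfar.trans_le (hmax' t₀ ht₀)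
    set ℓ : ℝ → ℝ := fun x => ∫ u in (-Real.pi)..x, w u with hℓ
    have hℓc : Continuous ℓ := intervalIntegral.continuous_primitive (fun a b => hw.ii a b) _
    have hℓs : ∀ s t, (∫ u in s..t, w u) = ℓ t - ℓ s := fun s t =>
      (intervalIntegral.integral_interval_sub_left (hw.ii _ t) (hw.ii _ s)).symm
    have hmL : k < ℓ m - ℓ (-Real.pi) := by
      rw [← hℓs]; exact hmk.trans_le (hc _ m le_rfl hm.1 hm.2)
    have hmR : k < ℓ Real.pi - ℓ m := by
      rw [← hℓs]; refine hmk.trans_le ?_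
      rw [hcl, dist_comm]; exact hc m _ hm.1 hm.2 le_rfl
    obtain ⟨a, ha, hae⟩ := intermediate_value_Icc hm.1 hℓc.continuousOn
      (show ℓ m - k ∈ Icc (ℓ (-Real.pi)) (ℓ m) from ⟨by linarith, by linarith⟩)
    obtain ⟨b, hb, hbe⟩ := intermediate_value_Icc hm.2 hℓc.continuousOn
      (show ℓ m + k ∈ Icc (ℓ m) (ℓ Real.pi) from ⟨by linarith, by linarith⟩)
    have hab : a < b := by
      rcases eq_or_lt_of_le (ha.2.trans hb.1) with h | h
      · rw [h] at hae; linarith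
      · exact h
    have hda : dist (c m) (c a) ≤ k := by
      rw [dist_comm]
      have := hc a m ha.1 ha.2 hm.2
      rw [hℓs] at this; linarith
    have hdb : dist (c m) (c b) ≤ k := by
      have := hc m b hm.1 hb.1 hb.2
      rw [hℓs] at this; linarith
    have hshort : dist (c a) (c b) ≤ 2 * k - 1 := by
      have := hyp_short hX δ hδ (c (-Real.pi)) (c m) (c a) (c b) k
        (hmax' a ⟨ha.1, ha.2.trans hm.2⟩) (hmax' b ⟨hm.1.trans hb.1, hb.2⟩) hda hdb
      linarith
    obtain ⟨c', w', W', hw', hc', hcl', hout, hV, hT⟩ := surgery hX hw hc hcl ha.1 hab hb.2 hshort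
    have hiab : (∫ u in a..b, w u) = 2 * k := by rw [hℓs]; linarith
    have hT' : (∫ u in (-Real.pi)..Real.pi, w' u) = (∫ u in (-Real.pi)..Real.pi, w u) - 1 := by
      rw [hT, hiab]; ring
    have hfill := ih c' w' W' hw' hc' hcl' (by rw [hT']; push_cast at hn; linarith)
    have hws := (hw.add hw').smul (by linarith : 0 ≤ 4 * k)
    set g : ℝ → ℝ := (Ioc a b).indicator fun t => 4 * k * (w t + w' t) with hg
    have hgm : Measurable g := hws.1.indicator measurableSet_Ioc
    have hstep := fill_step (fun t => kuratowski X x₀ (c t)) (fun t => kuratowski X x₀ (c' t))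
      (max W.toNNReal W'.toNNReal) ((hc.lip hw x₀).weaken (le_max_left _ _))
      ((hc'.lip hw' x₀).weaken (le_max_right _ _)) (by simp only [hcl]) (by simp only [hcl'])
      (fun t => w t + w' t) g hgm ?_ _ hfill
    · refine hstep.mono ?_
      have hI : ∫⁻ t in Ioo (-Real.pi) Real.pi, ENNReal.ofReal (g t) ≤
          ENNReal.ofReal (16 * k ^ 2) := by
        have e1 : ∀ t, ENNReal.ofReal (g t) =
            (Ioc a b).indicator (fun t => ENNReal.ofReal (4 * k * (w t + w' t))) t := by
          intro t
          by_cases ht : t ∈ Ioc a b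
          · rw [hg, indicator_of_mem ht, indicator_of_mem ht]
          · rw [hg, indicator_of_notMem ht, indicator_of_notMem ht, ENNReal.ofReal_zero]
        refine (setLIntegral_le_lintegral _ _).trans ?_
        simp only [e1]
        rw [lintegral_indicator measurableSet_Ioc, hws.lint hab.le]
        apply ENNReal.ofReal_le_ofReal
        rw [intervalIntegral.integral_const_mul, intervalIntegral.integral_add (hw.ii a b)
          (hw'.ii a b), hiab, hV]
        nlinarith
      refine (add_le_add_right (mul_le_mul_right hI _) _).trans (le_of_eq ?_)
      have hT0 : 0 ≤ ∫ u in (-Real.pi)..Real.pi, w' u := hw'.int_nonneg (by linarith)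
      rw [← ENNReal.ofReal_mul (by positivity), ← ENNReal.ofReal_add (by positivity) (by positivity),
        hT']
      congr 1; ring
    · filter_upwards [hc.loc hw x₀, hc'.loc hw' x₀] with t ht ht' htm
      have hq0 : 0 ≤ w t := hw.2.1 t
      have hq0' : 0 ≤ w' t := hw'.2.1 t
      refine ⟨by linarith, fun ε hε => ?_, ?_⟩
      · filter_upwards [ht htm ε hε, ht' htm ε hε] with s hs hs'
        exact ⟨hs.trans (by gcongr; linarith), hs'.trans (by gcongr; linarith)⟩
      · by_cases htab : t ∈ Ioc a b
        · rw [hg, indicator_of_mem htab]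
          refine mul_le_mul_of_nonneg_right ?_ (by linarith)
          refine (kur_le x₀ _ _).trans ?_
          have d1 := hc a t ha.1 htab.1.le (htab.2.trans hb.2)
          have d2 := hc' a t ha.1 htab.1.le (htab.2.trans hb.2)
          rw [hout a (by simp)] at d2
          have d3 := dist_triangle (c t) (c a) (c' t)
          rw [dist_comm (c t) (c a)] at d3
          have i1 := intervalIntegral.integral_add_adjacent_intervals (hw.ii a t) (hw.ii t b)
          have i2 := intervalIntegral.integral_add_adjacent_intervals (hw'.ii a t) (hw'.ii t b)
          have j1 := hw.int_nonneg htab.2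
          have j2 := hw'.int_nonneg htab.2
          linarith
        · rw [hg, indicator_of_notMem htab]
          simp only [hout t htab, sub_self, norm_zero, zero_mul, le_refl]
end Hyp

/-- a Gromov hyperbolic geodesic metric space `X` admits a linear
isoperimetric inequality in `L^∞(X)`: there is `C > 0` (depending only on `X`) such
that every loop `γ : [0,1] → X` with Lipschitz constant `Lγ` bounds a singular
Lipschitz disc of area at most `C·Lγ` in `L^∞(X)` (via the Kuratowski embedding). -/
theorem hyperbolic_linear_isoperimetric {X : Type u} [MetricSpace X] (x₀ : X)
    (hX : GeodesicSpace X) (hhyp : GromovHyperbolic X) :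
    ∃ C > (0:ℝ), ∀ (γ : ℝ → X) (Lγ : ℝ≥0),
      LipschitzOnWith Lγ γ (Set.Icc 0 1) → γ 0 = γ 1 →
      ∃ φ : ℝ × ℝ → Linfty X, BoundsLoop φ (fun s => kuratowski X x₀ (γ s)) ∧
        lipArea φ ≤ C * (Lγ : ℝ) := by
  obtain ⟨δ, hδ0, hδ⟩ := hhyp
  have hpi := Real.pi_pos
  refine ⟨4 * Real.pi * (16 * (4 * δ + 1) ^ 2), by positivity, fun γ L hL hγ => ?_⟩
  have hdens : Dens (fun _ => (L:ℝ) / (2 * Real.pi)) ((L:ℝ) / (2 * Real.pi)) :=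
    ⟨measurable_const, fun _ => by positivity, fun _ => le_rfl⟩
  have hint : (∫ _ in (-Real.pi)..Real.pi, (L:ℝ) / (2 * Real.pi)) = L := by
    rw [intervalIntegral.integral_const, smul_eq_mul]; field_simp; ring
  obtain ⟨n, hn⟩ := exists_nat_ge (L:ℝ)
  have hmem : ∀ t, -Real.pi ≤ t → t ≤ Real.pi →
      (t + Real.pi) / (2 * Real.pi) ∈ Set.Icc (0:ℝ) 1 := by
    intro t h1 h2
    refine ⟨div_nonneg (by linarith) (by positivity), ?_⟩
    rw [div_le_one (by positivity)]; linarith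
  have hfill := fill_ind x₀ hX δ hδ0 hδ _ rfl n
    (fun t => γ ((t + Real.pi) / (2 * Real.pi))) _ _ hdens ?_ ?_ (by rw [hint]; exact hn)
  · rw [hint] at hfill
    refine fill_transfer _ _ (fun s hs => ?_) _ (by positivity) hfill
    have : (2 * Real.pi * s - Real.pi + Real.pi) / (2 * Real.pi) = s := by field_simp; ring
    simp only [this]
  · intro s t hs hst ht
    have h1 := hL.dist_le_mul _ (hmem s hs (by linarith)) _ (hmem t (by linarith) ht)
    rw [intervalIntegral.integral_const, smul_eq_mul]
    refine h1.trans (le_of_eq ?_)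
    have e : (s + Real.pi) / (2 * Real.pi) - (t + Real.pi) / (2 * Real.pi) =
        -((t - s) / (2 * Real.pi)) := by ring
    rw [Real.dist_eq, e, abs_neg, abs_of_nonneg (div_nonneg (by linarith) (by positivity))]
    ring
  · have e1 : (-Real.pi + Real.pi) / (2 * Real.pi) = 0 := by simp
    have e2 : (Real.pi + Real.pi) / (2 * Real.pi) = 1 := by field_simp; ring
    simp only [e1, e2, hγ]

end SharpIsop
end

section
/- Let X and Y be metric spaces, ι: X → Y an isometric embedding, and κ: X → L^∞(X) the Kuratowski embedding. Let γ be a Lipschitz loop in X and suppose φ: D² → Y is a singular Lipschitz disc bounding ι∘γ. Then there exists a singular Lipschitz disc φ': D² → L^∞(X) bounding κ∘γ such that Area(φ') ≤ Area(φ) and, moreover, sup_{w ∈ D²} dist(φ'(w), κ(γ([0,1]))) ≤ sup_{w ∈ D²} dist(φ(w), ι(γ([0,1]))). In particular, both the least filling area and the least filling radius of a loop of X among all metric spaces isometrically containing X are attained (up to no loss) in L^∞(X). -/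
open scoped NNReal ENNReal
open MeasureTheory Filter

universe u v

namespace SharpIsop

lemma ev_mem {x : ℝ × ℝ} (hx : x ∈ interior D2) (v : ℝ × ℝ) :
    ∀ᶠ r : ℝ in nhdsWithin 0 (Set.Ioi 0), x + r • v ∈ D2 := by
  have hc : ContinuousAt (fun r : ℝ => x + r • v) 0 := by fun_prop
  have h1 : D2 ∈ nhds ((fun r : ℝ => x + r • v) 0) := by
    simpa using mem_interior_iff_mem_nhds.1 hx
  exact nhdsWithin_le_nhds (hc h1)

section
variable {Z : Type*} [PseudoMetricSpace Z]

lemma ev_bound {φ : ℝ × ℝ → Z} {K : ℝ≥0} (h : LipschitzOnWith K φ D2)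
    {x : ℝ × ℝ} (hx : x ∈ interior D2) (v : ℝ × ℝ) :
    ∀ᶠ r : ℝ in nhdsWithin 0 (Set.Ioi 0), dist (φ (x + r • v)) (φ x) / r ≤ K * ‖v‖ := by
  filter_upwards [ev_mem hx v, self_mem_nhdsWithin] with r hr hr0
  have hr0 : 0 < r := hr0
  rw [div_le_iff₀ hr0]
  have := h.dist_le_mul _ hr _ (interior_subset hx)
  rw [dist_eq_norm, add_sub_cancel_left, norm_smul, Real.norm_of_nonneg hr0.le] at this
  linarith

lemma bdd {φ : ℝ × ℝ → Z} {K : ℝ≥0} (h : LipschitzOnWith K φ D2)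
    {x : ℝ × ℝ} (hx : x ∈ interior D2) (v : ℝ × ℝ) :
    IsBoundedUnder (· ≤ ·) (nhdsWithin (0:ℝ) (Set.Ioi 0))
      (fun r : ℝ => dist (φ (x + r • v)) (φ x) / r) :=
  isBoundedUnder_of_eventually_le (ev_bound h hx v)

lemma cobdd (φ : ℝ × ℝ → Z) (x v : ℝ × ℝ) :
    IsCoboundedUnder (· ≤ ·) (nhdsWithin (0:ℝ) (Set.Ioi 0))
      (fun r : ℝ => dist (φ (x + r • v)) (φ x) / r) := by
  have : IsBoundedUnder (· ≥ ·) (nhdsWithin (0:ℝ) (Set.Ioi 0))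
      (fun r : ℝ => dist (φ (x + r • v)) (φ x) / r) := by
    refine isBoundedUnder_of_eventually_ge (a := 0) ?_
    filter_upwards [self_mem_nhdsWithin] with r hr
    exact div_nonneg dist_nonneg (le_of_lt hr)
  exact this.isCoboundedUnder_le

lemma mder_le {φ : ℝ × ℝ → Z} {K : ℝ≥0} (h : LipschitzOnWith K φ D2)
    {x : ℝ × ℝ} (hx : x ∈ interior D2) (v : ℝ × ℝ) : mder φ x v ≤ K * ‖v‖ :=
  limsup_le_of_le (cobdd φ x v) (ev_bound h hx v)

/-- radial retraction -/
noncomputable def retr (p : ℝ × ℝ) : ℝ × ℝ := (max 1 (√(p.1 ^ 2 + p.2 ^ 2)))⁻¹ • p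

lemma retr_cont : Continuous retr := by
  unfold retr
  have h0 : Continuous fun p : ℝ × ℝ => max 1 (√(p.1 ^ 2 + p.2 ^ 2)) := by fun_prop
  refine Continuous.smul (Continuous.inv₀ h0 ?_) continuous_id
  intro p
  have : (1:ℝ) ≤ max 1 (√(p.1 ^ 2 + p.2 ^ 2)) := le_max_left _ _
  positivity

lemma retr_mem (p : ℝ × ℝ) : retr p ∈ D2 := by
  have h1 : (1:ℝ) ≤ max 1 (√(p.1 ^ 2 + p.2 ^ 2)) := le_max_left _ _
  have h2 : √(p.1 ^ 2 + p.2 ^ 2) ≤ max 1 (√(p.1 ^ 2 + p.2 ^ 2)) := le_max_right _ _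
  have h3 := Real.sq_sqrt (by positivity : 0 ≤ p.1 ^ 2 + p.2 ^ 2)
  have h4 := Real.sqrt_nonneg (p.1 ^ 2 + p.2 ^ 2)
  simp only [retr, D2, Set.mem_setOf_eq, Prod.smul_fst, Prod.smul_snd, smul_eq_mul]
  set M := max 1 (√(p.1 ^ 2 + p.2 ^ 2))
  have h5 : p.1 ^ 2 + p.2 ^ 2 ≤ M ^ 2 := by rw [← h3]; gcongr
  have h6 : (M⁻¹ * p.1) ^ 2 + (M⁻¹ * p.2) ^ 2 = (p.1 ^ 2 + p.2 ^ 2) / M ^ 2 := by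
    field_simp
  rw [h6]
  exact div_le_one_of_le₀ h5 (by positivity)

lemma retr_eq {p : ℝ × ℝ} (hp : p ∈ D2) : retr p = p := by
  have : √(p.1 ^ 2 + p.2 ^ 2) ≤ 1 := by
    rw [Real.sqrt_le_left zero_le_one, one_pow]; exact hp
  simp [retr, max_eq_left this]

/-- the set of pairs with metric derivative at most one -/
def SS (ψ : ℝ × ℝ → Z) : Set ((ℝ × ℝ) × (ℝ × ℝ)) :=
  ⋂ m : ℕ, ⋃ n : ℕ, ⋂ r ∈ Set.Ioo (0:ℝ) (1 / (n + 1)),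
    {q | dist (ψ (q.1 + r • q.2)) (ψ q.1) ≤ (1 + 1 / ((m:ℝ) + 1)) * r}

lemma SS_meas {ψ : ℝ × ℝ → Z} (h : Continuous ψ) : MeasurableSet (SS ψ) := by
  refine MeasurableSet.iInter fun m => MeasurableSet.iUnion fun n => IsClosed.measurableSet ?_
  refine isClosed_biInter fun r _ => isClosed_le ?_ continuous_const
  fun_prop

lemma mem_SS {φ : ℝ × ℝ → Z} {K : ℝ≥0} (h : LipschitzOnWith K φ D2)
    {x : ℝ × ℝ} (hx : x ∈ interior D2) (v : ℝ × ℝ) :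
    mder φ x v ≤ 1 ↔ (x, v) ∈ SS (φ ∘ retr) := by
  unfold mder
  rw [limsup_le_iff (cobdd φ x v) (bdd h hx v)]
  simp only [SS, Set.mem_iInter, Set.mem_iUnion, Set.mem_setOf_eq, Function.comp]
  rw [retr_eq (interior_subset hx)]
  constructor
  · intro H m
    have hm : (1:ℝ) < 1 + 1 / ((m:ℝ) + 1) := by
      have : (0:ℝ) < 1 / ((m:ℝ) + 1) := by positivity
      linarith
    have h1 := (H _ hm).and ((ev_mem hx v).and self_mem_nhdsWithin)
    obtain ⟨e, he, hs⟩ := mem_nhdsGT_iff_exists_Ioo_subset.1 h1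
    obtain ⟨n, hn⟩ := exists_nat_one_div_lt (show (0:ℝ) < e from he)
    refine ⟨n, fun r hr => ?_⟩
    obtain ⟨h2, h3, h4⟩ := hs ⟨hr.1, hr.2.trans hn⟩
    rw [retr_eq h3]
    exact ((div_lt_iff₀ hr.1).1 h2).le
  · intro H y hy
    obtain ⟨m, hm⟩ := exists_nat_one_div_lt (sub_pos.2 hy)
    obtain ⟨n, hn⟩ := H m
    have : Set.Ioo (0:ℝ) (1 / ((n:ℝ) + 1)) ∈ nhdsWithin (0:ℝ) (Set.Ioi 0) :=
      Ioo_mem_nhdsGT (by positivity)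
    filter_upwards [this, ev_mem hx v] with r hr hr'
    have h2 := hn r hr
    rw [retr_eq hr'] at h2
    have h3 := (div_le_iff₀ hr.1).2 h2
    linarith

lemma set_eq {φ : ℝ × ℝ → Z} {K : ℝ≥0} (h : LipschitzOnWith K φ D2)
    {x : ℝ × ℝ} (hx : x ∈ interior D2) :
    {v | mder φ x v ≤ 1} = Prod.mk x ⁻¹' SS (φ ∘ retr) := by
  ext v; exact mem_SS h hx v

lemma ball_sub {φ : ℝ × ℝ → Z} {K : ℝ≥0} (h : LipschitzOnWith K φ D2)
    {x : ℝ × ℝ} (hx : x ∈ interior D2) :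
    Metric.ball 0 (1 / ((K:ℝ) + 1)) ⊆ {v | mder φ x v ≤ 1} := by
  intro v hv
  rw [mem_ball_zero_iff, lt_div_iff₀ (by positivity)] at hv
  have := mder_le h hx v
  have := norm_nonneg v
  show mder φ x v ≤ 1
  nlinarith

lemma jac2_nonneg (s : ℝ × ℝ → ℝ) : 0 ≤ jac2 s := by
  unfold jac2
  split_ifs
  · have := Real.pi_pos
    positivity
  · exact le_rfl

lemma jac2_le {φ : ℝ × ℝ → Z} {K : ℝ≥0} (h : LipschitzOnWith K φ D2)
    {x : ℝ × ℝ} (hx : x ∈ interior D2) :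
    jac2 (mder φ x) ≤
      Real.pi / (volume (Metric.ball (0 : ℝ × ℝ) (1 / ((K:ℝ) + 1)))).toReal := by
  have hpos : 0 < (volume (Metric.ball (0 : ℝ × ℝ) (1 / ((K:ℝ) + 1)))).toReal :=
    ENNReal.toReal_pos (Metric.measure_ball_pos _ _ (by positivity)).ne' measure_ball_lt_top.ne
  unfold jac2
  split_ifs with hf
  · exact div_le_div_of_nonneg_left Real.pi_pos.le hpos
      (ENNReal.toReal_mono hf.ne (measure_mono (ball_sub h hx)))
  · have := Real.pi_pos
    positivity

lemma D2_convex : Convex ℝ D2 := by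
  intro p hp q hq a b ha hb hab
  simp only [D2, Set.mem_setOf_eq, Prod.fst_add, Prod.snd_add, Prod.smul_fst, Prod.smul_snd,
    smul_eq_mul] at *
  obtain rfl : b = 1 - a := by linarith
  nlinarith [mul_nonneg (mul_nonneg ha hb) (sq_nonneg (p.1 - q.1)),
    mul_nonneg (mul_nonneg ha hb) (sq_nonneg (p.2 - q.2)),
    mul_le_mul_of_nonneg_left hp ha, mul_le_mul_of_nonneg_left hq hb]

lemma D2_closed : IsClosed D2 := by
  unfold D2
  exact isClosed_le (by fun_prop) (by fun_prop)

lemma D2_ae : ∀ᵐ x ∂(volume.restrict D2), x ∈ interior D2 := by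
  have h0 : volume (frontier D2) = 0 := D2_convex.addHaar_frontier volume
  rw [ae_restrict_iff' D2_closed.measurableSet]
  have : ∀ᵐ x ∂(volume : Measure (ℝ × ℝ)), x ∉ frontier D2 := measure_eq_zero_iff_ae_notMem.1 h0
  filter_upwards [this] with x hx hxD
  by_contra hc
  exact hx ⟨subset_closure hxD, hc⟩

lemma D2_fin : volume D2 < ⊤ := by
  have : D2 ⊆ Set.Icc (-1) 1 ×ˢ Set.Icc (-1:ℝ) 1 := by
    intro p hp
    simp only [D2, Set.mem_setOf_eq] at hp
    simp only [Set.mem_prod, Set.mem_Icc]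
    refine ⟨⟨?_, ?_⟩, ?_, ?_⟩ <;> nlinarith [sq_nonneg p.1, sq_nonneg p.2]
  exact (measure_mono this).trans_lt (isCompact_Icc.prod isCompact_Icc).measure_lt_top

lemma jac_int {φ : ℝ × ℝ → Z} {K : ℝ≥0} (h : LipschitzOnWith K φ D2) :
    Integrable (fun x => jac2 (mder φ x)) (volume.restrict D2) := by
  have hc : Continuous (φ ∘ retr) :=
    h.continuousOn.comp_continuous retr_cont retr_mem
  have hm : Measurable fun x => volume (Prod.mk x ⁻¹' SS (φ ∘ retr)) :=
    measurable_measure_prodMk_left (SS_meas hc)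
  have hm2 : Measurable fun x => if volume (Prod.mk x ⁻¹' SS (φ ∘ retr)) < ⊤ then
      Real.pi / (volume (Prod.mk x ⁻¹' SS (φ ∘ retr))).toReal else 0 :=
    Measurable.ite (measurableSet_lt hm measurable_const)
      (measurable_const.div hm.ennreal_toReal) measurable_const
  have : IsFiniteMeasure ((volume : Measure (ℝ × ℝ)).restrict D2) :=
    ⟨by rw [Measure.restrict_apply_univ]; exact D2_fin⟩
  refine Integrable.of_bound (C := Real.pi /
    (volume (Metric.ball (0 : ℝ × ℝ) (1 / ((K:ℝ) + 1)))).toReal) ?_ ?_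
  · refine hm2.aestronglyMeasurable.congr ?_
    filter_upwards [D2_ae] with x hx
    rw [jac2, set_eq h hx]
  · filter_upwards [D2_ae] with x hx
    rw [Real.norm_of_nonneg (jac2_nonneg _)]
    exact jac2_le h hx

lemma area_mono {W : Type*} [PseudoMetricSpace W] {φ : ℝ × ℝ → Z} {φ' : ℝ × ℝ → W}
    {K : ℝ≥0} (h : LipschitzOnWith K φ D2)
    (hd : ∀ a b, dist (φ' a) (φ' b) ≤ dist (φ a) (φ b)) : lipArea φ' ≤ lipArea φ := by
  unfold lipArea
  refine integral_mono_of_nonneg (Eventually.of_forall fun x => jac2_nonneg _) (jac_int h) ?_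
  filter_upwards [D2_ae] with x hx
  have hsub : {v | mder φ x v ≤ 1} ⊆ {v | mder φ' x v ≤ 1} := by
    intro v hv
    refine le_trans ?_ (show mder φ x v ≤ 1 from hv)
    refine limsup_le_limsup ?_ (cobdd φ' x v) (bdd h hx v)
    filter_upwards [self_mem_nhdsWithin] with r hr
    exact div_le_div_of_nonneg_right (hd _ _) (le_of_lt hr)
  have hle := measure_mono (μ := volume) hsub
  show jac2 (mder φ' x) ≤ jac2 (mder φ x)
  by_cases hf : volume {v | mder φ' x v ≤ 1} < ⊤
  · rw [jac2, jac2, if_pos hf, if_pos (hle.trans_lt hf)]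
    have hp : 0 < volume {v | mder φ x v ≤ 1} :=
      (Metric.measure_ball_pos volume (0 : ℝ × ℝ) (by positivity)).trans_le
        (measure_mono (ball_sub h hx))
    exact div_le_div_of_nonneg_left Real.pi_pos.le
      (ENNReal.toReal_pos hp.ne' (hle.trans_lt hf).ne) (ENNReal.toReal_mono hf.ne hle)
  · rw [jac2, if_neg hf]
    exact jac2_nonneg _

end

/-- McShane extension of the Kuratowski embedding -/
noncomputable def ext {X : Type u} [MetricSpace X] (x₀ : X)
    {Y : Type v} [MetricSpace Y] (ι : X → Y) (hι : Isometry ι) (y : Y) : Linfty X :=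
  ⟨fun x => dist y (ι x) - dist x₀ x, memℓp_infty ⟨dist y (ι x₀), by
    rintro t ⟨x, rfl⟩
    show ‖dist y (ι x) - dist x₀ x‖ ≤ dist y (ι x₀)
    rw [← hι.dist_eq x₀ x]
    simpa [Real.norm_eq_abs] using abs_dist_sub_le y (ι x₀) (ι x)⟩⟩

lemma ext_dist {X : Type u} [MetricSpace X] (x₀ : X)
    {Y : Type v} [MetricSpace Y] (ι : X → Y) (hι : Isometry ι) (y z : Y) :
    dist (ext x₀ ι hι y) (ext x₀ ι hι z) ≤ dist y z := by
  rw [dist_eq_norm]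
  refine lp.norm_le_of_forall_le dist_nonneg fun x => ?_
  have : (ext x₀ ι hι y - ext x₀ ι hι z : Linfty X) x = dist y (ι x) - dist z (ι x) := by
    show (dist y (ι x) - dist x₀ x) - (dist z (ι x) - dist x₀ x) = _
    ring
  rw [this]
  exact abs_dist_sub_le y z (ι x)

lemma ext_ι {X : Type u} [MetricSpace X] (x₀ : X)
    {Y : Type v} [MetricSpace Y] (ι : X → Y) (hι : Isometry ι) (x : X) :
    ext x₀ ι hι (ι x) = kuratowski X x₀ x := by
  apply Subtype.ext
  funext z
  show dist (ι x) (ι z) - dist x₀ z = dist x z - dist x₀ z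
  rw [hι.dist_eq]

/-- Lemma 2.3: if `X` embeds isometrically in `Y` via `ι` and a
Lipschitz loop `γ` in `X` bounds a singular Lipschitz disc `φ` in `Y`, then `κ ∘ γ`
bounds a singular Lipschitz disc `φ'` in `L^∞(X)` with `Area(φ') ≤ Area(φ)` whose
filling radius is no larger: any `R` bounding all distances `dist(φ(w), ι(γ([0,1])))`
(`w ∈ D²`) also bounds all distances `dist(φ'(w), κ(γ([0,1])))`. -/
theorem Linfty_fillings {X : Type u} [MetricSpace X] (x₀ : X)
    {Y : Type v} [MetricSpace Y] (ι : X → Y) (hι : Isometry ι)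
    (γ : ℝ → X) (hγ : IsLipLoop γ)
    (φ : ℝ × ℝ → Y) (hφ : BoundsLoop φ (fun s => ι (γ s))) :
    ∃ φ' : ℝ × ℝ → Linfty X,
      BoundsLoop φ' (fun s => kuratowski X x₀ (γ s)) ∧
      lipArea φ' ≤ lipArea φ ∧
      ∀ R : ℝ, (∀ w ∈ D2, Metric.infDist (φ w) (ι '' (γ '' Set.Icc 0 1)) ≤ R) →
        ∀ w ∈ D2, Metric.infDist (φ' w) (kuratowski X x₀ '' (γ '' Set.Icc 0 1)) ≤ R := by
  obtain ⟨⟨K, hK⟩, hb⟩ := hφ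
  refine ⟨fun p => ext x₀ ι hι (φ p), ⟨⟨K, ?_⟩, ?_⟩, ?_, ?_⟩
  · refine LipschitzOnWith.of_dist_le_mul fun a ha b hb => ?_
    exact (ext_dist x₀ ι hι _ _).trans (hK.dist_le_mul a ha b hb)
  · intro s hs
    simp only [hb s hs, ext_ι]
  · exact area_mono hK fun a b => ext_dist x₀ ι hι _ _
  · intro R hR w hw
    refine le_trans ?_ (hR w hw)
    have hne : (ι '' (γ '' Set.Icc (0:ℝ) 1)).Nonempty :=
      ((Set.nonempty_Icc.2 zero_le_one).image _).image _
    refine (Metric.le_infDist hne).2 ?_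
    rintro _ ⟨x, hx, rfl⟩
    refine (Metric.infDist_le_dist_of_mem (Set.mem_image_of_mem _ hx)).trans ?_
    rw [← ext_ι x₀ ι hι x]
    exact ext_dist x₀ ι hι _ _

end SharpIsop
end
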